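/- arXiv:2402.13619 — 3 statements merged into one kernel-verified Lean document; each statement's English description precedes it below -/
import Mathlib

section
/- If (π, H) is a factor unitary representation of a product group G = G₁ × G₂, then the restrictions π|_{G₁} and π|_{G₂} are factor representations; moreover if π|_{G₁} is of type I, then π is unitarily equivalent to a tensor product π₁ ⊗ π₂ of factor representations of G₁ and G₂, and if π is irreducible then π₁ and π₂ are irreducible. -/
/-!
Factoriality of the restrictions: an operator in the centre of `π(G₁)''` commutes with `π(G₁)`, and
also with `π(G₂)` because `π(G₂) ⊆ π(G₁)'`. It therefore lies in `π(G)'`, and it lies in `π(G)''`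
since `π(G₁)'' ⊆ π(G)''`; as `π` is a factor representation, it is scalar
(`isFactorRep_of_commute`).

Suppose now that `K` is an irreducible subrepresentation of `π|_{G₁}`. The second tensor factor is
the multiplicity space `F = Hom_{G₁}(K, H)`, and `m` is the evaluation map `K × F → H`.

* By Schur's lemma (`schur`), `S* T` is a scalar for `S, T ∈ F`. This scalar is the inner product
  of `F`; it induces the operator norm, so `F` is complete, and
  `⟪S v, T v'⟫ = ⟪v, v'⟫ ⟪S, T⟫` (`inner_intertwiners`).
* The closed span of the images of the intertwiners is invariant under `π(G₁)` and under `π(G₁)'`,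
  so the projection onto it is in the centre of `π(G₁)''`. It is nonzero, hence it is the identity
  (`dense_intertwiners`).
* `π(G₂)` commutes with `π(G₁)` and so acts on `F` by composition. This is `π₂`, and `π₁` is the
  restriction to `K`, irreducible by assumption and hence a factor representation by Schur's lemma.
* A bounded operator `A` on `F` has an amplification `1 ⊗ A` on `H` (`exists_amplification`). If `A`
  is in the centre of `π₂(G₂)''`, then `1 ⊗ A` is in the centre of `π(G)''`: operators commuting
  with `π` also act on `F` by composition. Thus `1 ⊗ A` is scalar, and so is `A`
  (`isFactorRep_right`).
* If `W ⊆ F` is closed and invariant under `π₂`, then the closed span of `m(K × W)` is invariant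
  under `π`; irreducibility of `π` makes it `0` or `H`, and `W` is `0` or `F` accordingly
  (`isIrredSet_right`).
-/

open scoped ComplexInnerProductSpace

/-- The commutant of a set of operators. -/
def commutant {R : Type*} [Mul R] (S : Set R) : Set R := {A | ∀ B ∈ S, A * B = B * A}

/-- A set `S` of operators generates a factor: `S' ∩ S'' = ℂ 1`. -/
def IsFactorRep {H : Type*} [NormedAddCommGroup H] [InnerProductSpace ℂ H]
    (S : Set (H →L[ℂ] H)) : Prop :=
  ∀ A ∈ commutant S ∩ commutant (commutant S), ∃ c : ℂ, A = c • (1 : H →L[ℂ] H)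

/-! ### Schur's lemma -/

section Schur

variable {E : Type*} [NormedAddCommGroup E] [InnerProductSpace ℂ E]

/-- A set of operators is irreducible if it leaves no closed subspace invariant besides `0` and
the whole space; the zero space counts as irreducible. -/
def IsIrredSet (S : Set (E →L[ℂ] E)) : Prop :=
  ∀ L : Submodule ℂ E, IsClosed (L : Set E) → (∀ B ∈ S, ∀ v ∈ L, B v ∈ L) → L = ⊥ ∨ L = ⊤

theorem eq_zero_of_irred_of_apply_eq_zero {S : Set (E →L[ℂ] E)} (hS : IsIrredSet S)
    {A : E →L[ℂ] E} (hA : A ∈ commutant S) {e : E} (he : e ≠ 0) (hAe : A e = 0) : A = 0 := by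
  rcases hS (LinearMap.ker (A : E →ₗ[ℂ] E)) A.isClosed_ker (fun B hB v hv => by
    have h := congrArg (fun T : E →L[ℂ] E => T v) (hA B hB)
    have hv' : A v = 0 := hv
    have h' : A (B v) = B (A v) := h
    show A (B v) = 0
    rw [h', hv', map_zero]) with h | h
  · exact absurd ((Submodule.eq_bot_iff _).1 h e hAe) he
  · ext v
    have : v ∈ LinearMap.ker (A : E →ₗ[ℂ] E) := h ▸ Submodule.mem_top
    exact this

theorem commutant_sub_smul {S : Set (E →L[ℂ] E)} {A : E →L[ℂ] E} (hA : A ∈ commutant S) (c : ℂ) :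
    A - c • 1 ∈ commutant S := fun B hB => by
  simp [sub_mul, mul_sub, hA B hB]

variable [CompleteSpace E]

theorem apply_eq_zero_of_nonneg {P : E →L[ℂ] E} (hP : 0 ≤ P) {e : E}
    (h : ⟪e, P e⟫ = 0) : P e = 0 := by
  have hs : CFC.sqrt P * CFC.sqrt P = P := CFC.sqrt_mul_sqrt_self P
  have hsa : IsSelfAdjoint (CFC.sqrt P) := IsSelfAdjoint.of_nonneg (CFC.sqrt_nonneg P)
  have h0 : CFC.sqrt P e = 0 := by
    rw [← inner_self_eq_zero (𝕜 := ℂ), ← h]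
    conv_rhs => rw [← hs]
    exact hsa.isSymmetric e (CFC.sqrt P e)
  rw [← hs]
  show CFC.sqrt P (CFC.sqrt P e) = 0
  rw [h0, map_zero]

/-- The self-adjoint case of Schur's lemma, normalized by `⟪e, A e⟫ = 0`. The positive and negative
parts of `A` have product zero, and the positive part lies in the commutant, so one of them
vanishes; then `A` is semi-definite and `⟪e, A e⟫ = 0` forces `A e = 0`. -/
theorem schur_aux {S : Set (E →L[ℂ] E)} (hS : IsIrredSet S) {A : E →L[ℂ] E}
    (hA : A ∈ commutant S) (hsa : IsSelfAdjoint A) {e : E} (he : e ≠ 0)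
    (h : ⟪e, A e⟫ = 0) : A = 0 := by
  refine eq_zero_of_irred_of_apply_eq_zero hS hA he ?_
  have hcomm : A⁺ ∈ commutant S := fun B hB => by
    have : Commute A B := hA B hB
    exact this.cfcₙ_real _
  have hdec : A⁺ - A⁻ = A := CFC.posPart_sub_negPart A hsa
  by_cases hneg : ∃ v, A⁻ v ≠ 0
  · obtain ⟨v, hv⟩ := hneg
    have hp : A⁺ = 0 := eq_zero_of_irred_of_apply_eq_zero hS hcomm hv
      (congrArg (fun T : E →L[ℂ] E => T v) (CFC.posPart_mul_negPart A))
    have hA' : A = -A⁻ := by rw [hp, zero_sub] at hdec; exact hdec.symm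
    have : A⁻ e = 0 := apply_eq_zero_of_nonneg (CFC.negPart_nonneg A) (by
      rw [hA'] at h
      simpa using h)
    rw [hA']; simpa using this
  · push Not at hneg
    have hA' : A = A⁺ := by
      have : A⁻ = 0 := by ext v; simpa using hneg v
      rw [this, sub_zero] at hdec; exact hdec.symm
    rw [hA'] at h ⊢
    exact apply_eq_zero_of_nonneg (CFC.posPart_nonneg A) h

theorem star_mem_commutant {S : Set (E →L[ℂ] E)} (hstar : ∀ B ∈ S, star B ∈ S)
    {A : E →L[ℂ] E} (hA : A ∈ commutant S) : star A ∈ commutant S := fun B hB => by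
  have := congrArg star (hA _ (hstar B hB))
  simpa using this.symm

theorem schur_selfAdjoint {S : Set (E →L[ℂ] E)} (hS : IsIrredSet S) {A : E →L[ℂ] E}
    (hA : A ∈ commutant S) (hsa : IsSelfAdjoint A) : ∃ c : ℂ, A = c • (1 : E →L[ℂ] E) := by
  by_cases hE : ∃ e : E, e ≠ 0
  · obtain ⟨e, he⟩ := hE
    have hee : ⟪e, e⟫ ≠ 0 := inner_self_ne_zero.2 he
    set c : ℂ := ⟪e, A e⟫ / ⟪e, e⟫ with hc
    have hcr : star c = c := by
      have h1 : star ⟪e, A e⟫ = ⟪e, A e⟫ := by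
        show (starRingEnd ℂ) _ = _
        rw [inner_conj_symm]; exact hsa.isSymmetric e e
      have h2 : star ⟪e, e⟫ = ⟪e, e⟫ := inner_conj_symm e e
      rw [hc, star_div₀, h1, h2]
    refine ⟨c, sub_eq_zero.1 (schur_aux hS (commutant_sub_smul hA c) ?_ he ?_)⟩
    · rw [IsSelfAdjoint, star_sub, star_smul, hcr, hsa.star_eq, star_one]
    · simp only [sub_apply, inner_sub_right, smul_apply, one_apply_eq_self, inner_smul_right]
      rw [hc, div_mul_cancel₀ _ hee, sub_self]
  · push Not at hE
    exact ⟨0, by ext v; rw [hE v]; simp⟩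

/-- Schur's lemma for a star-closed irreducible set of operators. -/
theorem schur {S : Set (E →L[ℂ] E)} (hstar : ∀ B ∈ S, star B ∈ S) (hS : IsIrredSet S)
    {A : E →L[ℂ] E} (hA : A ∈ commutant S) : ∃ c : ℂ, A = c • (1 : E →L[ℂ] E) := by
  have hA' := star_mem_commutant hstar hA
  obtain ⟨a, ha⟩ := schur_selfAdjoint hS (A := A + star A)
    (fun B hB => by rw [add_mul, mul_add, hA B hB, hA' B hB]) (IsSelfAdjoint.add_star_self A)
  obtain ⟨b, hb⟩ := schur_selfAdjoint hS (A := Complex.I • (A - star A))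
    (fun B hB => by
      rw [smul_mul_assoc, mul_smul_comm, sub_mul, mul_sub, hA B hB, hA' B hB])
    (by rw [IsSelfAdjoint, star_smul, star_sub, star_star]; simp [sub_eq_add_neg, add_comm])
  refine ⟨(a - Complex.I * b) / 2, ?_⟩
  have hb' : A - star A = (-Complex.I * b) • (1 : E →L[ℂ] E) := by
    rw [mul_smul, ← hb, smul_smul]; simp
  have h2 : (2 : ℂ) • A = (a - Complex.I * b) • (1 : E →L[ℂ] E) := by
    calc (2 : ℂ) • A = (A + star A) + (A - star A) := by rw [two_smul]; abel
      _ = _ := by rw [ha, hb', ← add_smul]; ring_nf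
  rw [div_eq_inv_mul, mul_smul, ← h2, smul_smul]; simp

/-- The projection onto a closed subspace commutes with any operator which, together with its
adjoint, preserves that subspace. -/
theorem starProjection_commute (D : Submodule ℂ E) [D.HasOrthogonalProjection] {B : E →L[ℂ] E}
    (h1 : ∀ v ∈ D, B v ∈ D) (h2 : ∀ v ∈ D, star B v ∈ D) :
    D.starProjection * B = B * D.starProjection := by
  ext v
  show D.starProjection (B v) = B (D.starProjection v)
  refine Submodule.eq_starProjection_of_mem_of_inner_eq_zero
    (h1 _ (D.starProjection_apply_mem v)) fun w hw => ?_
  rw [← map_sub, ← ContinuousLinearMap.adjoint_inner_right]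
  exact (Submodule.mem_orthogonal' _ _).1 (D.sub_starProjection_mem_orthogonal v) _ (h2 w hw)

end Schur

/-! ### Amplification of an operator on a tensor factor -/

section Tensor

open TensorProduct

variable {E F H : Type*} [NormedAddCommGroup E] [InnerProductSpace ℂ E]
  [NormedAddCommGroup F] [InnerProductSpace ℂ F] [NormedAddCommGroup H] [InnerProductSpace ℂ H]

theorem inner_lTensor [CompleteSpace F] (A : F →L[ℂ] F) (x y : E ⊗[ℂ] F) :
    ⟪LinearMap.lTensor E (A : F →ₗ[ℂ] F) x, y⟫
      = ⟪x, LinearMap.lTensor E (star A : F →L[ℂ] F).toLinearMap y⟫ := by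
  induction x with
  | zero => simp
  | add a b ha hb => simp only [map_add, inner_add_left, ha, hb]
  | tmul v w =>
    induction y with
    | zero => simp
    | add a b ha hb => simp only [map_add, inner_add_right, ha, hb]
    | tmul v' w' =>
      simp [ContinuousLinearMap.star_eq_adjoint, ContinuousLinearMap.adjoint_inner_right]

/-- The bound `‖(1 ⊗ A) x‖ ≤ ‖A‖ ‖x‖`: writing `‖A‖² - A* A = C²` with `C` self-adjoint, the
difference of the squares of the two sides is `‖(1 ⊗ C) x‖²`. -/
theorem norm_lTensor_le [CompleteSpace F] (A : F →L[ℂ] F) (x : E ⊗[ℂ] F) :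
    ‖LinearMap.lTensor E (A : F →ₗ[ℂ] F) x‖ ≤ ‖A‖ * ‖x‖ := by
  set P : F →L[ℂ] F := ((‖A‖ : ℂ) ^ 2) • 1 - star A * A with hPdef
  have hP : 0 ≤ P := by
    rw [ContinuousLinearMap.nonneg_iff_isPositive, ContinuousLinearMap.isPositive_def']
    refine ⟨?_, fun w => ?_⟩
    · rw [IsSelfAdjoint, hPdef]; simp
    · have h1 : P.reApplyInnerSelf w = (‖A‖ * ‖w‖) ^ 2 - ‖A w‖ ^ 2 := by
        rw [ContinuousLinearMap.reApplyInnerSelf_apply, hPdef]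
        have h2 : ⟪(star A * A) w, w⟫ = ⟪A w, A w⟫ :=
          ContinuousLinearMap.adjoint_inner_left A w (A w)
        have h3 : ((((‖A‖ : ℂ) ^ 2) • (1 : F →L[ℂ] F)) - star A * A) w
          = ((‖A‖ ^ 2 : ℝ) : ℂ) • w - (star A * A) w := by simp
        rw [h3, inner_sub_left, h2, inner_smul_left, inner_self_eq_norm_sq_to_K,
          inner_self_eq_norm_sq_to_K, Complex.conj_ofReal]
        simp only [mul_pow, RCLike.re_to_complex, Complex.coe_algebraMap]
        norm_cast
      rw [h1, sub_nonneg]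
      exact pow_le_pow_left₀ (norm_nonneg _) (A.le_opNorm w) 2
  have hs : CFC.sqrt P * CFC.sqrt P = P := CFC.sqrt_mul_sqrt_self P
  have hsa : star (CFC.sqrt P) = CFC.sqrt P := IsSelfAdjoint.of_nonneg (CFC.sqrt_nonneg P)
  set C := CFC.sqrt P
  have hsum : star A * A + star C * C = ((‖A‖ : ℂ) ^ 2) • 1 := by
    rw [hsa, hs, hPdef]; abel
  have key (B : F →L[ℂ] F) : ⟪LinearMap.lTensor E (B : F →ₗ[ℂ] F) x,
      LinearMap.lTensor E (B : F →ₗ[ℂ] F) x⟫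
      = ⟪x, LinearMap.lTensor E (star B * B : F →L[ℂ] F).toLinearMap x⟫ := by
    rw [inner_lTensor, ← LinearMap.comp_apply, ← LinearMap.lTensor_comp]; rfl
  have hself (y : E ⊗[ℂ] F) : ⟪y, y⟫ = ((‖y‖ ^ 2 : ℝ) : ℂ) := by
    push_cast; exact inner_self_eq_norm_sq_to_K y
  have hadd : ⟪LinearMap.lTensor E (A : F →ₗ[ℂ] F) x, LinearMap.lTensor E (A : F →ₗ[ℂ] F) x⟫
      + ⟪LinearMap.lTensor E (C : F →ₗ[ℂ] F) x, LinearMap.lTensor E (C : F →ₗ[ℂ] F) x⟫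
      = ((‖A‖ ^ 2 * ‖x‖ ^ 2 : ℝ) : ℂ) := by
    rw [key, key]
    refine (inner_add_right (𝕜 := ℂ) x _ _).symm.trans ?_
    rw [← LinearMap.add_apply, ← LinearMap.lTensor_add,
      ← ContinuousLinearMap.toLinearMap_add, hsum]
    have : LinearMap.lTensor E (((‖A‖ : ℂ) ^ 2) • (1 : F →L[ℂ] F)).toLinearMap x
        = ((‖A‖ : ℂ) ^ 2) • x := by
      rw [ContinuousLinearMap.toLinearMap_smul, LinearMap.lTensor_smul]
      show ((‖A‖ : ℂ) ^ 2) • LinearMap.lTensor E (LinearMap.id) x = _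
      rw [LinearMap.lTensor_id]; rfl
    rw [this]
    refine (inner_smul_right (𝕜 := ℂ) x x _).trans ?_
    rw [hself]
    push_cast; rfl
  rw [hself, hself] at hadd
  norm_cast at hadd
  refine (sq_le_sq₀ (norm_nonneg _) (by positivity)).1 ?_
  rw [mul_pow]
  have := sq_nonneg ‖LinearMap.lTensor E (C : F →ₗ[ℂ] F) x‖
  linarith

/-- If `m` realizes `H` as the Hilbert tensor product of `E` and `F`, every bounded operator `A` on
`F` has an amplification `1 ⊗ A` on `H`. -/
theorem exists_amplification [CompleteSpace F] [CompleteSpace H] (m : E →ₗ[ℂ] F →ₗ[ℂ] H)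
    (hm : ∀ v v' w w', ⟪m v w, m v' w'⟫ = ⟪v, v'⟫ * ⟪w, w'⟫)
    (hd : (Submodule.span ℂ {u : H | ∃ v w, u = m v w}).topologicalClosure = ⊤)
    (A : F →L[ℂ] F) : ∃ B : H →L[ℂ] H, ∀ v w, B (m v w) = m v (A w) := by
  set L : E ⊗[ℂ] F →ₗ[ℂ] H := TensorProduct.lift m
  have hL (x y : E ⊗[ℂ] F) : ⟪L x, L y⟫ = ⟪x, y⟫ := by
    induction x with
    | zero => simp
    | add a b ha hb => simp only [map_add, inner_add_left, ha, hb]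
    | tmul v w =>
      induction y with
      | zero => simp
      | add a b ha hb => simp only [map_add, inner_add_right, ha, hb]
      | tmul v' w' => simp [L, hm]
  have hn (x : E ⊗[ℂ] F) : ‖L x‖ = ‖x‖ := (L.isometryOfInner hL).norm_map x
  have hdense : DenseRange L := by
    have h1 : Dense ((Submodule.span ℂ {u : H | ∃ v w, u = m v w} : Submodule ℂ H) : Set H) :=
      Submodule.dense_iff_topologicalClosure_eq_top.2 hd
    refine h1.mono ?_
    have : Submodule.span ℂ {u : H | ∃ v w, u = m v w} ≤ LinearMap.range L :=
      Submodule.span_le.2 fun u ⟨v, w, hu⟩ => ⟨v ⊗ₜ w, by simp [L, hu]⟩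
    exact fun u hu => this hu
  refine ⟨(L ∘ₗ LinearMap.lTensor E (A : F →ₗ[ℂ] F)).extendOfNorm L, fun v w => ?_⟩
  have := LinearMap.extendOfNorm_eq (f := L ∘ₗ LinearMap.lTensor E (A : F →ₗ[ℂ] F)) hdense
    ⟨‖A‖, fun x => by
      rw [LinearMap.comp_apply, hn, hn]; exact norm_lTensor_le A x⟩ (v ⊗ₜ w)
  simpa [L] using this

end Tensor

/-! ### Unitary representations -/

section Reps

theorem map_mem_closure_span {H : Type*} [NormedAddCommGroup H] [InnerProductSpace ℂ H]
    {s : Set H} {B : H →L[ℂ] H} (h : ∀ x ∈ s, B x ∈ s) :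
    ∀ x ∈ (Submodule.span ℂ s).topologicalClosure, B x ∈ (Submodule.span ℂ s).topologicalClosure := by
  set D := (Submodule.span ℂ s).topologicalClosure
  have : D ≤ D.comap (B : H →ₗ[ℂ] H) := by
    refine Submodule.topologicalClosure_minimal _ (Submodule.span_le.2 fun x hx => ?_)
      ((Submodule.isClosed_topologicalClosure _).preimage B.continuous)
    exact Submodule.le_topologicalClosure _ (Submodule.subset_span (h x hx))
  exact fun x hx => this hx

variable {G : Type*} [Group G] {E : Type*} [NormedAddCommGroup E] [InnerProductSpace ℂ E]
  [CompleteSpace E]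

theorem star_unitary_rep (U : G →* unitary (E →L[ℂ] E)) (g : G) :
    star (U g : E →L[ℂ] E) = (U g⁻¹ : E →L[ℂ] E) := by
  rw [map_inv, ← Unitary.star_eq_inv, Unitary.coe_star]

theorem star_mem_range_rep (U : G →* unitary (E →L[ℂ] E)) :
    ∀ B ∈ Set.range fun g => (U g : E →L[ℂ] E), star B ∈ Set.range fun g => (U g : E →L[ℂ] E) := by
  rintro _ ⟨g, rfl⟩
  exact ⟨g⁻¹, (star_unitary_rep U g).symm⟩

theorem inner_rep_rep (U : G →* unitary (E →L[ℂ] E)) (g : G) (v w : E) :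
    ⟪(U g : E →L[ℂ] E) v, (U g : E →L[ℂ] E) w⟫ = ⟪v, w⟫ :=
  ContinuousLinearMap.inner_map_map_of_mem_unitary (U g).2 v w

theorem inner_rep_inv_left (U : G →* unitary (E →L[ℂ] E)) (g : G) (v w : E) :
    ⟪(U g⁻¹ : E →L[ℂ] E) v, w⟫ = ⟪v, (U g : E →L[ℂ] E) w⟫ := by
  rw [← star_unitary_rep]
  exact ContinuousLinearMap.adjoint_inner_left _ _ _

theorem exists_unitary_rep (ρ : G → E →L[ℂ] E) (h1 : ρ 1 = 1)
    (hmul : ∀ g h, ρ (g * h) = ρ g * ρ h) (hin : ∀ g v w, ⟪ρ g v, ρ g w⟫ = ⟪v, w⟫) :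
    ∃ V : G →* unitary (E →L[ℂ] E), ∀ g, (V g : E →L[ℂ] E) = ρ g := by
  have hs (g : G) : star (ρ g) * ρ g = 1 := by
    ext v
    refine ext_inner_left ℂ fun w => ?_
    show ⟪w, (ρ g).adjoint (ρ g v)⟫ = ⟪w, v⟫
    rw [ContinuousLinearMap.adjoint_inner_right, hin]
  have hinv (g : G) : ρ g * ρ g⁻¹ = 1 := by rw [← hmul, mul_inv_cancel, h1]
  have hstar (g : G) : star (ρ g) = ρ g⁻¹ := left_inv_eq_right_inv (hs g) (hinv g)
  exact ⟨MonoidHom.codRestrict ⟨⟨ρ, h1⟩, hmul⟩ (unitary (E →L[ℂ] E))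
    fun g => Unitary.mem_iff.2 ⟨hs g, by
      show ρ g * star (ρ g) = 1
      rw [hstar, hinv]⟩, fun g => rfl⟩

end Reps

/-! ### Tensor product representations -/

section TensorRep

variable {G₁ G₂ : Type*} [Group G₁] [Group G₂] {E F H : Type*}
  [NormedAddCommGroup E] [InnerProductSpace ℂ E] [CompleteSpace E]
  [NormedAddCommGroup F] [InnerProductSpace ℂ F] [CompleteSpace F]
  [NormedAddCommGroup H] [InnerProductSpace ℂ H] [CompleteSpace H]

omit [CompleteSpace E] [CompleteSpace F] [CompleteSpace H] in
theorem tensor_right_injective {m : E →ₗ[ℂ] F →ₗ[ℂ] H}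
    (hm : ∀ v v' w w', ⟪m v w, m v' w'⟫ = ⟪v, v'⟫ * ⟪w, w'⟫) {e : E} (he : e ≠ 0) {w w' : F}
    (h : m e w = m e w') : w = w' := by
  have h1 : ⟪e, e⟫ * ⟪w - w', w - w'⟫ = 0 := by
    rw [← hm, map_sub, h, sub_self, inner_zero_left]
  rcases mul_eq_zero.1 h1 with h2 | h2
  · exact absurd (inner_self_eq_zero.1 h2) he
  · exact sub_eq_zero.1 (inner_self_eq_zero.1 h2)

/-- The second factor of a factor representation `π ≅ π₁ ⊗ π₂` is a factor representation, provided
that every operator commuting with `π` is of the form `1 ⊗ B₂`: under this hypothesis, the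
amplification `1 ⊗ A` of a central element `A` of `π₂(G₂)''` is central in `π(G)''`. -/
theorem isFactorRep_right (π : (G₁ × G₂) →* unitary (H →L[ℂ] H))
    (hfactor : IsFactorRep (Set.range fun p : G₁ × G₂ => (π p : H →L[ℂ] H)))
    (π₁ : G₁ →* unitary (E →L[ℂ] E)) (π₂ : G₂ →* unitary (F →L[ℂ] F))
    (m : E →ₗ[ℂ] F →ₗ[ℂ] H) (hm : ∀ v v' w w', ⟪m v w, m v' w'⟫ = ⟪v, v'⟫ * ⟪w, w'⟫)
    (hd : (Submodule.span ℂ {u : H | ∃ v w, u = m v w}).topologicalClosure = ⊤)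
    (hπ : ∀ g₁ g₂ v w, (π (g₁, g₂) : H →L[ℂ] H) (m v w)
      = m ((π₁ g₁ : E →L[ℂ] E) v) ((π₂ g₂ : F →L[ℂ] F) w))
    {e : E} (he : e ≠ 0)
    (hred : ∀ B ∈ commutant (Set.range fun p : G₁ × G₂ => (π p : H →L[ℂ] H)),
      ∃ B₂ : F →L[ℂ] F, ∀ v w, B (m v w) = m v (B₂ w)) :
    IsFactorRep (Set.range fun g₂ : G₂ => (π₂ g₂ : F →L[ℂ] F)) := by
  rintro A ⟨hA, hA'⟩
  obtain ⟨B, hB⟩ := exists_amplification m hm hd A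
  have hext {S T : H →L[ℂ] H} (h : ∀ v w, S (m v w) = T (m v w)) : S = T :=
    ContinuousLinearMap.ext_on (Submodule.dense_iff_topologicalClosure_eq_top.2 hd)
      (by rintro _ ⟨v, w, rfl⟩; exact h v w)
  have hBcomm : B ∈ commutant (Set.range fun p : G₁ × G₂ => (π p : H →L[ℂ] H)) := by
    rintro _ ⟨⟨g₁, g₂⟩, rfl⟩
    refine hext fun v w => ?_
    have h := congrArg (fun T : F →L[ℂ] F => T w) (hA _ ⟨g₂, rfl⟩)
    have h' : A ((π₂ g₂ : F →L[ℂ] F) w) = (π₂ g₂ : F →L[ℂ] F) (A w) := h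
    show B ((π (g₁, g₂) : H →L[ℂ] H) (m v w)) = (π (g₁, g₂) : H →L[ℂ] H) (B (m v w))
    rw [hπ, hB, hB, hπ, h']
  have hBB : B ∈ commutant (commutant (Set.range fun p : G₁ × G₂ => (π p : H →L[ℂ] H))) := by
    intro C hC
    obtain ⟨C₂, hC₂⟩ := hred C hC
    have hC₂comm : C₂ ∈ commutant (Set.range fun g₂ : G₂ => (π₂ g₂ : F →L[ℂ] F)) := by
      rintro _ ⟨g₂, rfl⟩
      ext w
      refine tensor_right_injective hm he ?_
      have h := congrArg (fun T : H →L[ℂ] H => T (m e w)) (hC _ ⟨((1 : G₁), g₂), rfl⟩)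
      have h' : C ((π (1, g₂) : H →L[ℂ] H) (m e w)) = (π (1, g₂) : H →L[ℂ] H) (C (m e w)) := h
      rw [hπ, hC₂, hC₂, hπ] at h'
      simpa using h'
    refine hext fun v w => ?_
    have h := congrArg (fun T : F →L[ℂ] F => T w) (hA' _ hC₂comm)
    have h' : A (C₂ w) = C₂ (A w) := h
    show B (C (m v w)) = C (B (m v w))
    rw [hC₂, hB, hB, hC₂, h']
  obtain ⟨c, hc⟩ := hfactor B ⟨hBcomm, hBB⟩
  refine ⟨c, ?_⟩
  ext w
  refine tensor_right_injective hm he ?_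
  rw [← hB, hc]
  simp

/-- If `π ≅ π₁ ⊗ π₂` is irreducible, a closed invariant subspace `W` of the second factor yields
the closed invariant subspace `E ⊗ W`, so `W` is trivial. -/
theorem isIrredSet_right (π : (G₁ × G₂) →* unitary (H →L[ℂ] H))
    (hirr : IsIrredSet (Set.range fun p : G₁ × G₂ => (π p : H →L[ℂ] H)))
    (π₁ : G₁ →* unitary (E →L[ℂ] E)) (π₂ : G₂ →* unitary (F →L[ℂ] F))
    (m : E →ₗ[ℂ] F →ₗ[ℂ] H) (hm : ∀ v v' w w', ⟪m v w, m v' w'⟫ = ⟪v, v'⟫ * ⟪w, w'⟫)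
    (hπ : ∀ g₁ g₂ v w, (π (g₁, g₂) : H →L[ℂ] H) (m v w)
      = m ((π₁ g₁ : E →L[ℂ] E) v) ((π₂ g₂ : F →L[ℂ] F) w))
    {e : E} (he : e ≠ 0) :
    IsIrredSet (Set.range fun g₂ : G₂ => (π₂ g₂ : F →L[ℂ] F)) := by
  intro W hWc hW
  set s : Set H := {u | ∃ v, ∃ w ∈ W, u = m v w}
  have hinv : ∀ B ∈ Set.range fun p : G₁ × G₂ => (π p : H →L[ℂ] H),
      ∀ x ∈ (Submodule.span ℂ s).topologicalClosure,
        B x ∈ (Submodule.span ℂ s).topologicalClosure := by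
    rintro _ ⟨⟨g₁, g₂⟩, rfl⟩
    refine map_mem_closure_span ?_
    rintro _ ⟨v, w, hw, rfl⟩
    exact ⟨_, _, hW _ ⟨g₂, rfl⟩ w hw, hπ g₁ g₂ v w⟩
  rcases hirr _ (Submodule.isClosed_topologicalClosure _) hinv with h | h
  · left
    rw [Submodule.eq_bot_iff] at h ⊢
    intro w hw
    have h0 := h (m e w) (Submodule.le_topologicalClosure _ (Submodule.subset_span ⟨e, w, hw, rfl⟩))
    exact tensor_right_injective hm he (by rw [h0, map_zero])
  · right
    rw [Submodule.topologicalClosure_eq_top_iff] at h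
    have hWo : Wᗮ = ⊥ := by
      rw [Submodule.eq_bot_iff]
      intro w hw
      have hmem : m e w ∈ (Submodule.span ℂ s)ᗮ := by
        rw [Submodule.mem_orthogonal]
        intro u hu
        induction hu using Submodule.span_induction with
        | mem u hu =>
          obtain ⟨v, w', hw', rfl⟩ := hu
          rw [hm, (Submodule.mem_orthogonal _ _).1 hw w' hw', mul_zero]
        | zero => simp
        | add a b _ _ ha hb => rw [inner_add_left, ha, hb, add_zero]
        | smul c a _ ha => rw [inner_smul_left, ha, mul_zero]
      rw [h, Submodule.mem_bot] at hmem
      exact tensor_right_injective hm he (by rw [hmem, map_zero])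
    rw [← Submodule.topologicalClosure_eq_top_iff] at hWo
    rwa [hWc.submodule_topologicalClosure_eq] at hWo

end TensorRep

/-! ### Intertwiners and the multiplicity space -/

section Intertwiners

variable {G : Type*} [Group G] {E H : Type*}
  [NormedAddCommGroup E] [InnerProductSpace ℂ E] [CompleteSpace E]
  [NormedAddCommGroup H] [InnerProductSpace ℂ H] [CompleteSpace H]

/-- The space `Hom_G(E, H)` of bounded intertwiners from `V` to `U`. -/
def intertwiners (V : G →* unitary (E →L[ℂ] E)) (U : G →* unitary (H →L[ℂ] H)) :
    Submodule ℂ (E →L[ℂ] H) where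
  carrier := {T | ∀ g, (U g : H →L[ℂ] H) ∘L T = T ∘L (V g : E →L[ℂ] E)}
  add_mem' hS hT g := by
    rw [ContinuousLinearMap.comp_add, ContinuousLinearMap.add_comp, hS g, hT g]
  zero_mem' g := by simp
  smul_mem' c T hT g := by
    rw [ContinuousLinearMap.comp_smul, ContinuousLinearMap.smul_comp, hT g]

variable {V : G →* unitary (E →L[ℂ] E)} {U : G →* unitary (H →L[ℂ] H)}

theorem intertwiner_apply (T : intertwiners V U) (g : G) (v : E) :
    (U g : H →L[ℂ] H) (T.1 v) = T.1 ((V g : E →L[ℂ] E) v) :=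
  congrArg (fun S : E →L[ℂ] H => S v) (T.2 g)

instance completeSpace_intertwiners : CompleteSpace (intertwiners V U) := by
  suffices h : IsClosed (intertwiners V U : Set (E →L[ℂ] H)) from h.completeSpace_coe
  have : (intertwiners V U : Set (E →L[ℂ] H))
      = ⋂ g, {T | (U g : H →L[ℂ] H) ∘L T = T ∘L (V g : E →L[ℂ] E)} := by
    ext T; simp only [Set.mem_iInter]; rfl
  rw [this]
  exact isClosed_iInter fun g => isClosed_eq (by fun_prop) (by fun_prop)

/-- If `V` is irreducible, then `S* T` is scalar for intertwiners `S`, `T`; the scalar is found by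
evaluating at a unit vector. -/
theorem inner_intertwiners (hV : IsIrredSet (Set.range fun g => (V g : E →L[ℂ] E)))
    {e : E} (he : ‖e‖ = 1) (S T : intertwiners V U) (v w : E) :
    ⟪S.1 v, T.1 w⟫ = ⟪v, w⟫ * ⟪S.1 e, T.1 e⟫ := by
  obtain ⟨c, hc⟩ := schur (star_mem_range_rep V) hV (A := S.1.adjoint ∘L T.1) (by
    rintro _ ⟨g, rfl⟩
    ext v
    refine ext_inner_left ℂ fun w => ?_
    show ⟪w, S.1.adjoint (T.1 ((V g : E →L[ℂ] E) v))⟫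
      = ⟪w, (V g : E →L[ℂ] E) (S.1.adjoint (T.1 v))⟫
    rw [ContinuousLinearMap.adjoint_inner_right, ← inner_rep_inv_left,
      ContinuousLinearMap.adjoint_inner_right, ← intertwiner_apply, ← intertwiner_apply,
      inner_rep_inv_left])
  have key (v w : E) : ⟪S.1 v, T.1 w⟫ = c * ⟪v, w⟫ := by
    rw [← ContinuousLinearMap.adjoint_inner_right]
    have : S.1.adjoint (T.1 w) = c • w := congrArg (fun A : E →L[ℂ] E => A w) hc
    rw [this, inner_smul_right]
  have hee : ⟪e, e⟫ = 1 := by rw [inner_self_eq_norm_sq_to_K, he]; simp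
  rw [key, key e e, hee, mul_one, mul_comm]

theorem norm_intertwiner (hV : IsIrredSet (Set.range fun g => (V g : E →L[ℂ] E)))
    {e : E} (he : ‖e‖ = 1) (T : intertwiners V U) : ‖T‖ = ‖T.1 e‖ := by
  refine le_antisymm ?_ ?_
  · refine ContinuousLinearMap.opNorm_le_bound _ (norm_nonneg _) fun v => ?_
    have h := inner_intertwiners hV he T T v v
    simp only [inner_self_eq_norm_sq_to_K, Complex.coe_algebraMap] at h
    norm_cast at h
    rw [← mul_pow] at h
    rw [mul_comm]
    exact ((sq_eq_sq₀ (norm_nonneg _) (by positivity)).1 h).le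
  · have := T.1.le_opNorm e
    rwa [he, mul_one] at this

/-- Operators commuting with `U` act on `Hom_G(E, H)` by composition. -/
noncomputable def postcomp (B : H →L[ℂ] H)
    (hB : B ∈ commutant (Set.range fun g => (U g : H →L[ℂ] H))) :
    intertwiners V U →L[ℂ] intertwiners V U :=
  ((ContinuousLinearMap.compL ℂ E H H B) ∘L (intertwiners V U).subtypeL).codRestrict
    (intertwiners V U) fun T g => by
      show (U g : H →L[ℂ] H) ∘L (B ∘L T.1) = (B ∘L T.1) ∘L (V g : E →L[ℂ] E)
      have h : B ∘L (U g : H →L[ℂ] H) = (U g : H →L[ℂ] H) ∘L B := hB _ ⟨g, rfl⟩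
      rw [← ContinuousLinearMap.comp_assoc, ← h, ContinuousLinearMap.comp_assoc, T.2 g]
      rfl

theorem postcomp_apply (B : H →L[ℂ] H)
    (hB : B ∈ commutant (Set.range fun g => (U g : H →L[ℂ] H))) (T : intertwiners V U) (v : E) :
    (postcomp B hB T).1 v = B (T.1 v) := rfl

/-- The multiplicity space `Hom_G(E, H)` of an irreducible `V`, as a type of its own carrying the
Hilbert space structure given by the unit vector `e`. -/
def MultSpace (_hV : IsIrredSet (Set.range fun g => (V g : E →L[ℂ] E))) {e : E} (_he : ‖e‖ = 1)
    (U : G →* unitary (H →L[ℂ] H)) : Type _ := intertwiners V U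

section MultSpace

variable (hV : IsIrredSet (Set.range fun g => (V g : E →L[ℂ] E))) {e : E} (he : ‖e‖ = 1)

noncomputable instance : NormedAddCommGroup (MultSpace hV he U) :=
  inferInstanceAs (NormedAddCommGroup (intertwiners V U))

noncomputable instance : NormedSpace ℂ (MultSpace hV he U) :=
  inferInstanceAs (NormedSpace ℂ (intertwiners V U))

/-- The inner product `⟪S e, T e⟫`, which induces the operator norm. -/
noncomputable instance : InnerProductSpace ℂ (MultSpace hV he U) where
  __ := (inferInstance : NormedSpace ℂ (MultSpace hV he U))
  inner S T := ⟪S.1 e, T.1 e⟫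
  norm_sq_eq_re_inner T := by
    refine (congrArg (fun x : ℝ => x ^ 2) (norm_intertwiner hV he T)).trans ?_
    exact norm_sq_eq_re_inner (𝕜 := ℂ) (T.1 e)
  conj_inner_symm S T := inner_conj_symm _ _
  add_left S T R := inner_add_left _ _ _
  smul_left S T c := inner_smul_left _ _ _

instance : CompleteSpace (MultSpace hV he U) :=
  inferInstanceAs (CompleteSpace (intertwiners V U))

/-- Composition with an operator commuting with `U`, on the multiplicity space. -/
noncomputable def MultSpace.postcomp (B : H →L[ℂ] H)
    (hB : B ∈ commutant (Set.range fun g => (U g : H →L[ℂ] H))) :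
    MultSpace hV he U →L[ℂ] MultSpace hV he U :=
  (_root_.postcomp B hB : intertwiners V U →L[ℂ] intertwiners V U)

end MultSpace

/-- The closed span of the images of all intertwiners is invariant under `U` and its commutant, so
its projection is central. When `U` is a factor representation it is therefore `0` or everything. -/
theorem dense_intertwiners (hU : IsFactorRep (Set.range fun g => (U g : H →L[ℂ] H)))
    (T₀ : intertwiners V U) (hT₀ : T₀ ≠ 0) :
    (Submodule.span ℂ {u : H | ∃ (v : E) (T : intertwiners V U), u = T.1 v}).topologicalClosure
      = ⊤ := by
  set s : Set H := {u : H | ∃ (v : E) (T : intertwiners V U), u = T.1 v}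
  set D := (Submodule.span ℂ s).topologicalClosure with hD
  have : CompleteSpace D := (Submodule.isClosed_topologicalClosure _).completeSpace_coe
  have hinv (g : G) : ∀ x ∈ D, (U g : H →L[ℂ] H) x ∈ D := by
    refine map_mem_closure_span ?_
    rintro _ ⟨v, T, rfl⟩
    exact ⟨_, T, intertwiner_apply T g v⟩
  have hinv' (B : H →L[ℂ] H) (hB : B ∈ commutant (Set.range fun g => (U g : H →L[ℂ] H))) :
      ∀ x ∈ D, B x ∈ D := by
    refine map_mem_closure_span ?_
    rintro _ ⟨v, T, rfl⟩
    exact ⟨v, postcomp B hB T, rfl⟩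
  obtain ⟨c, hc⟩ := hU D.starProjection ⟨by
      rintro _ ⟨g, rfl⟩
      exact starProjection_commute D (hinv g) (by rw [star_unitary_rep]; exact hinv g⁻¹),
    fun B hB => starProjection_commute D (hinv' B hB)
      (hinv' _ (star_mem_commutant (star_mem_range_rep U) hB))⟩
  obtain ⟨v, hv⟩ : ∃ v, T₀.1 v ≠ 0 := by
    by_contra! h
    exact hT₀ (Subtype.ext (ContinuousLinearMap.ext h))
  have hmem : T₀.1 v ∈ D :=
    Submodule.le_topologicalClosure _ (Submodule.subset_span ⟨v, T₀, rfl⟩)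
  have h1 : c • T₀.1 v = T₀.1 v := by
    have := D.starProjection_eq_self_iff.2 hmem
    rw [hc] at this
    exact this
  have hc1 : c = 1 := by
    have : (c - 1) • T₀.1 v = 0 := by rw [sub_smul, h1, one_smul, sub_self]
    rcases smul_eq_zero.1 this with h | h
    · exact sub_eq_zero.1 h
    · exact absurd h hv
  refine (Submodule.eq_top_iff').2 fun x => ?_
  rw [← D.starProjection_eq_self_iff, hc, hc1]
  simp

end Intertwiners

/-! ### Subrepresentations and commuting restrictions -/

/-- A minimal closed invariant subspace `K` of `U` carries an irreducible unitary representation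
`V`, by restriction. -/
theorem exists_restriction {G H : Type*} [Group G] [NormedAddCommGroup H] [InnerProductSpace ℂ H]
    [CompleteSpace H] (U : G →* unitary (H →L[ℂ] H)) (K : Submodule ℂ H) [CompleteSpace K]
    (hinv : ∀ g, ∀ v ∈ K, (U g : H →L[ℂ] H) v ∈ K)
    (hmin : ∀ L : Submodule ℂ H, L ≤ K → IsClosed (L : Set H) →
      (∀ g, ∀ v ∈ L, (U g : H →L[ℂ] H) v ∈ L) → L = ⊥ ∨ L = K) :
    ∃ V : G →* unitary (K →L[ℂ] K),
      (∀ g (v : K), ((V g : K →L[ℂ] K) v : H) = (U g : H →L[ℂ] H) v)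
        ∧ IsIrredSet (Set.range fun g => (V g : K →L[ℂ] K)) := by
  obtain ⟨V, hV⟩ := exists_unitary_rep
    (fun g => ((U g : H →L[ℂ] H) ∘L K.subtypeL).codRestrict K fun v => hinv g v v.2)
    (by ext v; simp) (fun g h => by
      ext v
      exact congrArg (fun B : unitary (H →L[ℂ] H) => (B : H →L[ℂ] H) v) (map_mul U g h))
    (fun g v w => inner_rep_rep U g v w)
  have hVU (g) (v : K) : ((V g : K →L[ℂ] K) v : H) = (U g : H →L[ℂ] H) v := by rw [hV]; rfl
  refine ⟨V, hVU, fun L hL hLinv => ?_⟩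
  have hKc : IsClosed (K : Set H) := (completeSpace_coe_iff_isComplete.1 ‹_›).isClosed
  rcases hmin (L.map K.subtype) (Submodule.map_subtype_le K L)
    (by
      rw [Submodule.map_coe]
      exact hKc.isClosedEmbedding_subtypeVal.isClosedMap _ hL)
    (by
      rintro g _ ⟨v, hv, rfl⟩
      exact ⟨_, hLinv _ ⟨g, rfl⟩ v hv, hVU g v⟩) with h | h
  · left
    rw [Submodule.eq_bot_iff] at h ⊢
    exact fun v hv => Subtype.ext (h v ⟨v, hv, rfl⟩)
  · right
    rw [Submodule.eq_top_iff']
    intro v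
    have hv : (v : H) ∈ L.map K.subtype := by rw [h]; exact v.2
    obtain ⟨w, hw, hwv⟩ := hv
    rwa [← Subtype.ext (show (w : H) = v from hwv)]

/-- If `S ⊆ W`, `T` commutes with `S` and `S' ∩ T' ⊆ W'`, then the
centre of `S''` is contained in the centre of `W''`. -/
theorem isFactorRep_of_commute {H : Type*} [NormedAddCommGroup H] [InnerProductSpace ℂ H]
    {S T W : Set (H →L[ℂ] H)} (hW : IsFactorRep W) (hSW : S ⊆ W) (hT : T ⊆ commutant S)
    (hgen : commutant S ∩ commutant T ⊆ commutant W) : IsFactorRep S := by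
  rintro A ⟨hA, hA'⟩
  exact hW A ⟨hgen ⟨hA, fun B hB => hA' B (hT hB)⟩,
    fun B hB => hA' B fun C hC => hB C (hSW hC)⟩

/-! ### Factor representations of a product -/

/-- Factoriality for product groups: if `π` is a factor unitary representation of
`G₁ × G₂`, then `π|_{G₁}` and `π|_{G₂}` are factor representations, and if `π|_{G₁}` is of
type I (contains an irreducible subrepresentation), then `π` is unitarily equivalent to a
tensor product `π₁ ⊗ π₂` of factor representations (realized via a map `m` with the universal
inner-product property of the Hilbert tensor product), irreducible factors if `π` is
irreducible. -/
theorem stmt_5 {G₁ G₂ : Type} [Group G₁] [Group G₂]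
    {H : Type} [NormedAddCommGroup H] [InnerProductSpace ℂ H] [CompleteSpace H]
    (π : (G₁ × G₂) →* unitary (H →L[ℂ] H))
    (hfactor : IsFactorRep (Set.range fun p : G₁ × G₂ => (π p : H →L[ℂ] H))) :
    (IsFactorRep (Set.range fun g₁ : G₁ => (π (g₁, 1) : H →L[ℂ] H))
      ∧ IsFactorRep (Set.range fun g₂ : G₂ => (π (1, g₂) : H →L[ℂ] H)))
    ∧ ((∃ K : Submodule ℂ H, IsClosed (K : Set H) ∧ K ≠ ⊥ ∧
          (∀ g₁ : G₁, ∀ v ∈ K, (π (g₁, 1) : H →L[ℂ] H) v ∈ K) ∧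
          (∀ L : Submodule ℂ H, L ≤ K → IsClosed (L : Set H) →
            (∀ g₁ : G₁, ∀ v ∈ L, (π (g₁, 1) : H →L[ℂ] H) v ∈ L) → L = ⊥ ∨ L = K)) →
        ∃ (H₁ H₂ : Type) (_ : NormedAddCommGroup H₁) (_ : InnerProductSpace ℂ H₁)
          (_ : NormedAddCommGroup H₂) (_ : InnerProductSpace ℂ H₂)
          (_ : CompleteSpace H₁) (_ : CompleteSpace H₂)
          (π₁ : G₁ →* unitary (H₁ →L[ℂ] H₁)) (π₂ : G₂ →* unitary (H₂ →L[ℂ] H₂))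
          (m : H₁ →ₗ[ℂ] H₂ →ₗ[ℂ] H),
          -- `m` realizes `H` as the Hilbert tensor product `H₁ ⊗̂ H₂`
          (∀ (v v' : H₁) (w w' : H₂), ⟪m v w, m v' w'⟫ = ⟪v, v'⟫ * ⟪w, w'⟫)
          ∧ (Submodule.span ℂ {u : H | ∃ v w, u = m v w}).topologicalClosure = ⊤
          -- `π ≅ π₁ ⊗ π₂`
          ∧ (∀ (g₁ : G₁) (g₂ : G₂) (v : H₁) (w : H₂),
              (π (g₁, g₂) : H →L[ℂ] H) (m v w)
                = m ((π₁ g₁ : H₁ →L[ℂ] H₁) v) ((π₂ g₂ : H₂ →L[ℂ] H₂) w))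
          ∧ IsFactorRep (Set.range fun g₁ : G₁ => (π₁ g₁ : H₁ →L[ℂ] H₁))
          ∧ IsFactorRep (Set.range fun g₂ : G₂ => (π₂ g₂ : H₂ →L[ℂ] H₂))
          -- if `π` is irreducible then so are `π₁` and `π₂`
          ∧ ((∀ K : Submodule ℂ H, IsClosed (K : Set H) →
                (∀ p : G₁ × G₂, ∀ v ∈ K, (π p : H →L[ℂ] H) v ∈ K) → K = ⊥ ∨ K = ⊤) →
              (∀ K : Submodule ℂ H₁, IsClosed (K : Set H₁) →
                (∀ g₁ : G₁, ∀ v ∈ K, (π₁ g₁ : H₁ →L[ℂ] H₁) v ∈ K) → K = ⊥ ∨ K = ⊤)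
              ∧ (∀ K : Submodule ℂ H₂, IsClosed (K : Set H₂) →
                (∀ g₂ : G₂, ∀ v ∈ K, (π₂ g₂ : H₂ →L[ℂ] H₂) v ∈ K) → K = ⊥ ∨ K = ⊤))) := by
  classical
  set U₁ : G₁ →* unitary (H →L[ℂ] H) := π.comp (MonoidHom.inl G₁ G₂) with hU₁
  set U₂ : G₂ →* unitary (H →L[ℂ] H) := π.comp (MonoidHom.inr G₁ G₂) with hU₂
  have hmul (g₁ : G₁) (g₂ : G₂) : (π (g₁, g₂) : H →L[ℂ] H) = (U₁ g₁ : H →L[ℂ] H) * U₂ g₂ := by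
    have : π (g₁, g₂) = U₁ g₁ * U₂ g₂ := by simp [hU₁, hU₂, ← map_mul]
    rw [this]; rfl
  have hmul' (g₁ : G₁) (g₂ : G₂) : (π (g₁, g₂) : H →L[ℂ] H) = (U₂ g₂ : H →L[ℂ] H) * U₁ g₁ := by
    have : π (g₁, g₂) = U₂ g₂ * U₁ g₁ := by simp [hU₁, hU₂, ← map_mul]
    rw [this]; rfl
  have hcomm (g₁ : G₁) (g₂ : G₂) : (U₁ g₁ : H →L[ℂ] H) * U₂ g₂ = (U₂ g₂ : H →L[ℂ] H) * U₁ g₁ :=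
    (hmul g₁ g₂).symm.trans (hmul' g₁ g₂)
  have hF₁ : IsFactorRep (Set.range fun g₁ : G₁ => (U₁ g₁ : H →L[ℂ] H)) := by
    refine isFactorRep_of_commute (T := Set.range fun g₂ : G₂ => (U₂ g₂ : H →L[ℂ] H)) hfactor
      ?_ ?_ ?_
    · rintro _ ⟨g, rfl⟩; exact ⟨(g, 1), rfl⟩
    · rintro _ ⟨g₂, rfl⟩ _ ⟨g₁, rfl⟩
      exact (hcomm g₁ g₂).symm
    · rintro A ⟨h1, h2⟩ _ ⟨⟨g₁, g₂⟩, rfl⟩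
      have h1' : A * U₁ g₁ = U₁ g₁ * A := h1 _ ⟨g₁, rfl⟩
      have h2' : A * U₂ g₂ = U₂ g₂ * A := h2 _ ⟨g₂, rfl⟩
      show A * (π (g₁, g₂) : H →L[ℂ] H) = π (g₁, g₂) * A
      rw [hmul, ← mul_assoc, h1', mul_assoc, h2', mul_assoc]
  have hF₂ : IsFactorRep (Set.range fun g₂ : G₂ => (U₂ g₂ : H →L[ℂ] H)) := by
    refine isFactorRep_of_commute (T := Set.range fun g₁ : G₁ => (U₁ g₁ : H →L[ℂ] H)) hfactor
      ?_ ?_ ?_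
    · rintro _ ⟨g, rfl⟩; exact ⟨(1, g), rfl⟩
    · rintro _ ⟨g₁, rfl⟩ _ ⟨g₂, rfl⟩
      exact hcomm g₁ g₂
    · rintro A ⟨h2, h1⟩ _ ⟨⟨g₁, g₂⟩, rfl⟩
      have h1' : A * U₁ g₁ = U₁ g₁ * A := h1 _ ⟨g₁, rfl⟩
      have h2' : A * U₂ g₂ = U₂ g₂ * A := h2 _ ⟨g₂, rfl⟩
      show A * (π (g₁, g₂) : H →L[ℂ] H) = π (g₁, g₂) * A
      rw [hmul, ← mul_assoc, h1', mul_assoc, h2', mul_assoc]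
  refine ⟨⟨hF₁, hF₂⟩, ?_⟩
  rintro ⟨K, hKc, hK0, hKinv, hKmin⟩
  have : CompleteSpace K := hKc.completeSpace_coe
  obtain ⟨V, hVU, hVirr⟩ := exists_restriction U₁ K hKinv hKmin
  have : Nontrivial K := Submodule.nontrivial_iff_ne_bot.2 hK0
  obtain ⟨e, he⟩ := exists_norm_eq K (zero_le_one' ℝ)
  have he0 : e ≠ 0 := by rintro rfl; simp at he
  let F := MultSpace hVirr he U₁
  have hcomm₂ (g₂ : G₂) : (U₂ g₂ : H →L[ℂ] H)
      ∈ commutant (Set.range fun g₁ => (U₁ g₁ : H →L[ℂ] H)) := by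
    rintro _ ⟨g₁, rfl⟩; exact (hcomm g₁ g₂).symm
  obtain ⟨π₂, hπ₂⟩ : ∃ π₂ : G₂ →* unitary (F →L[ℂ] F),
      ∀ g₂, (π₂ g₂ : F →L[ℂ] F)
        = MultSpace.postcomp hVirr he (U₂ g₂ : H →L[ℂ] H) (hcomm₂ g₂) := by
    refine exists_unitary_rep (fun g₂ => MultSpace.postcomp hVirr he (U₂ g₂ : H →L[ℂ] H) (hcomm₂ g₂)) ?_ ?_ ?_
    · refine ContinuousLinearMap.ext fun T => Subtype.ext (ContinuousLinearMap.ext fun v => ?_)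
      exact congrArg (fun B : unitary (H →L[ℂ] H) => (B : H →L[ℂ] H) (T.1 v)) (map_one U₂)
    · intro g h
      refine ContinuousLinearMap.ext fun T => Subtype.ext (ContinuousLinearMap.ext fun v => ?_)
      exact congrArg (fun B : unitary (H →L[ℂ] H) => (B : H →L[ℂ] H) (T.1 v)) (map_mul U₂ g h)
    · intro g S T
      exact inner_rep_rep U₂ g (S.1 e) (T.1 e)
  -- the evaluation map `K × Hom_G₁(K, H) → H`
  let m : K →ₗ[ℂ] F →ₗ[ℂ] H :=
    LinearMap.mk₂ ℂ (fun v T => T.1 v) (fun v w T => map_add T.1 v w)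
      (fun c v T => map_smul T.1 c v) (fun v S T => rfl) (fun c v T => rfl)
  have hm : ∀ (v v' : K) (w w' : F), ⟪m v w, m v' w'⟫ = ⟪v, v'⟫ * ⟪w, w'⟫ :=
    fun v v' S T => inner_intertwiners hVirr he S T v v'
  let T₀ : F := ⟨K.subtypeL, fun g => by ext v; exact (hVU g v).symm⟩
  have hT₀ : T₀ ≠ 0 := fun h => he0 (Subtype.ext (congrArg (fun T => T.1 e) h))
  have hd : (Submodule.span ℂ {u : H | ∃ v w, u = m v w}).topologicalClosure = ⊤ :=
    dense_intertwiners hF₁ T₀ hT₀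
  have hπ : ∀ (g₁ : G₁) (g₂ : G₂) (v : K) (w : F),
      (π (g₁, g₂) : H →L[ℂ] H) (m v w) = m ((V g₁ : K →L[ℂ] K) v)
        ((π₂ g₂ : F →L[ℂ] F) w) := fun g₁ g₂ v T => by
    rw [hmul', hπ₂]
    show (U₂ g₂ : H →L[ℂ] H) ((U₁ g₁ : H →L[ℂ] H) (T.1 v))
      = (U₂ g₂ : H →L[ℂ] H) (T.1 ((V g₁ : K →L[ℂ] K) v))
    exact congrArg (fun x => (U₂ g₂ : H →L[ℂ] H) x) (intertwiner_apply T g₁ v)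
  refine ⟨K, F, inferInstance, inferInstance, inferInstance, inferInstance,
    inferInstance, inferInstance, V, π₂, m, hm, hd, hπ, ?_, ?_, ?_⟩
  · exact fun A hA => schur (star_mem_range_rep V) hVirr hA.1
  · refine isFactorRep_right π hfactor V π₂ m hm hd hπ he0 fun B hB => ?_
    have hB₁ : B ∈ commutant (Set.range fun g₁ => (U₁ g₁ : H →L[ℂ] H)) := by
      rintro _ ⟨g₁, rfl⟩; exact hB _ ⟨(g₁, 1), rfl⟩
    exact ⟨MultSpace.postcomp hVirr he B hB₁, fun v T => rfl⟩
  · intro hirr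
    refine ⟨fun L hL hinv => hVirr L hL ?_, fun L hL hinv => ?_⟩
    · rintro _ ⟨g, rfl⟩; exact hinv g
    · refine isIrredSet_right π (fun L hL hinv => hirr L hL fun p => hinv _ ⟨p, rfl⟩) V π₂ m hm hπ
        he0 L hL ?_
      rintro _ ⟨g, rfl⟩; exact hinv g
end

section
/- Let Z be a connected abelian Banach–Lie group whose character group Ẑ = Hom(Z, 𝕋) is countable. Then every norm-continuous unitary representation of Z on a complex Hilbert space decomposes as an orthogonal Hilbert-space direct sum of joint eigenspaces H_χ = {v : π(z)v = χ(z)v for all z ∈ Z} over χ ∈ Ẑ. -/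
/-! The norm closure `A` of the *-algebra generated by the operators `π x` is a commutative unital
C⋆-algebra. A point `φ` of its Gelfand spectrum restricts to a continuous character `x ↦ φ (π x)`
of `z` trivial on `Γ`, which lifts through the universal covering `ℝ → 𝕋` to a continuous
functional `α` integral on `Γ`; as `A` is generated by `π`, the point `φ` is determined by `α`.
So the spectrum is a countable compact Hausdorff space, and by Baire's theorem it has an isolated
point `φ`. The indicator function of `{φ}` corresponds to a nonzero `p : A` with `a * p = φ a • p`
for all `a`, so the range of `p` consists of eigenvectors of `π`.

Thus every nonzero representation of this kind has a nonzero eigenvector. The orthogonal complement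
of the closed span of all eigenvectors is invariant under `π` and contains no nonzero eigenvector;
applying this to the subrepresentation on it shows that it is zero.
-/

open WeakDual in
/-- If a nontrivial commutative C⋆-algebra has countable spectrum, then the spectrum has an
isolated point by Baire's theorem; `p` is the projection given by the indicator function of such
a point. -/
lemma exists_atom_of_countable_characterSpace {A : Type*} [CommCStarAlgebra A] [Nontrivial A]
    [Countable (characterSpace ℂ A)] :
    ∃ (φ : characterSpace ℂ A) (p : A), p ≠ 0 ∧ ∀ a, a * p = φ a • p := by
  obtain ⟨φ, ψ, hψ⟩ := nonempty_interior_of_iUnion_of_closed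
    (f := fun φ : characterSpace ℂ A => ({φ} : Set (characterSpace ℂ A)))
    (fun _ => isClosed_singleton) (Set.iUnion_of_singleton _)
  have hopen : IsOpen ({φ} : Set (characterSpace ℂ A)) := by
    obtain rfl : ψ = φ := by simpa using interior_subset hψ
    rw [← interior_eq_iff_isOpen]
    exact subset_antisymm interior_subset (by simpa using hψ)
  have hclopen : IsClopen ({φ} : Set (characterSpace ℂ A)) := ⟨isClosed_singleton, hopen⟩
  let f : C(characterSpace ℂ A, ℂ) :=
    ⟨Set.indicator {φ} 1, continuous_one.indicator (by simp [hclopen.frontier_eq])⟩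
  have hf : f φ = 1 := by simp [f]
  have hf' : ∀ ψ, ψ ≠ φ → f ψ = 0 := fun ψ h => by simp [f, h]
  refine ⟨φ, (gelfandStarTransform A).symm f, ?_, fun a => ?_⟩
  · intro h
    have : f = 0 := by simpa using h
    simp [this] at hf
  · refine EquivLike.injective (gelfandStarTransform A) ?_
    rw [map_mul, map_smul, StarAlgEquiv.apply_symm_apply]
    ext ψ
    by_cases h : ψ = φ
    · subst h
      simp
    · simp [hf' ψ h]

/-- Continuous unitary characters of a real normed space come from continuous functionals. The
lift of the character through `ℝ → 𝕋` vanishing at `0` is additive by uniqueness of lifts. -/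
lemma exists_functional_of_character {z : Type*} [NormedAddCommGroup z] [NormedSpace ℝ z]
    (χ : z → ℂ) (hχ : Continuous χ) (hnorm : ∀ x, ‖χ x‖ = 1)
    (hadd : ∀ x y, χ (x + y) = χ x * χ y) :
    ∃ α : z →L[ℝ] ℝ, ∀ x, χ x = Complex.exp (2 * Real.pi * Complex.I * (α x : ℝ)) := by
  let f : C(z, Circle) := ⟨fun x => ⟨χ x, mem_sphere_zero_iff_norm.2 (hnorm x)⟩, by fun_prop⟩
  have hfadd : ∀ x y, f (x + y) = f x * f y := fun x y => Circle.ext (hadd x y)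
  have hf0 : f 0 = 1 := by simpa using hfadd 0 0
  obtain ⟨F, ⟨hF0, hF⟩, -⟩ := Circle.isCoveringMap_exp.existsUnique_continuousMap_lifts f 0 0
    (by simp [hf0])
  have hF' : ∀ x, Circle.exp (F x) = f x := fun x => congrFun hF x
  have hFadd : ∀ x y, F (x + y) = F x + F y := by
    intro x y
    let G : C(z, ℝ) := ⟨fun y => F (x + y) - F x, by fun_prop⟩
    have hG : G = F := (Circle.isCoveringMap_exp.existsUnique_continuousMap_lifts f 0 0
      (by simp [hf0])).unique
      ⟨by simp [G], by
        funext y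
        simp [G, Circle.exp_sub, hF', hfadd]⟩ ⟨hF0, hF⟩
    have : F (x + y) - F x = F y := congrArg (fun g : C(z, ℝ) => g y) hG
    linarith
  let α : z →L[ℝ] ℝ :=
    (AddMonoidHom.mk' (F : z → ℝ) hFadd).toRealLinearMap F.continuous
  refine ⟨(2 * Real.pi)⁻¹ • α, fun x => ?_⟩
  have h1 : χ x = Circle.exp (F x) := by rw [hF']; rfl
  have h2 : α x = F x := rfl
  rw [h1, Circle.coe_exp]
  congr 1
  have := Real.pi_ne_zero
  simp only [smul_apply, h2, smul_eq_mul]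
  push_cast
  field_simp

open WeakDual in
/-- A periodic continuous unitary family in a commutative C⋆-algebra, separating the points of the
spectrum: each point of the spectrum yields a functional integral on `Γ`, and distinct points yield
distinct functionals, so the spectrum is countable and has an atom. -/
lemma exists_eigenprojection {z : Type*} [NormedAddCommGroup z] [NormedSpace ℝ z]
    (Γ : AddSubgroup z)
    (hcount : Set.Countable {α : z →L[ℝ] ℝ | ∀ γ ∈ Γ, ∃ n : ℤ, α γ = (n : ℝ)})
    {A : Type*} [CommCStarAlgebra A] [Nontrivial A] (ρ : z → A) (hρ : Continuous ρ)
    (hunit : ∀ x, star (ρ x) * ρ x = 1)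
    (hadd : ∀ x y, ρ (x + y) = ρ x * ρ y)
    (hper : ∀ γ ∈ Γ, ρ γ = 1)
    (hsep : ∀ φ ψ : characterSpace ℂ A, (∀ x, φ (ρ x) = ψ (ρ x)) → φ = ψ) :
    ∃ p : A, p ≠ 0 ∧ ∃ α : z →L[ℝ] ℝ, (∀ γ ∈ Γ, ∃ n : ℤ, α γ = (n : ℝ)) ∧
      ∀ x, ρ x * p = Complex.exp (2 * Real.pi * Complex.I * (α x : ℝ)) • p := by
  have hlift : ∀ φ : characterSpace ℂ A, ∃ α : z →L[ℝ] ℝ,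
      (∀ γ ∈ Γ, ∃ n : ℤ, α γ = (n : ℝ)) ∧
        ∀ x, φ (ρ x) = Complex.exp (2 * Real.pi * Complex.I * (α x : ℝ)) := by
    intro φ
    obtain ⟨α, hα⟩ := exists_functional_of_character (fun x => φ (ρ x))
      ((map_continuous φ).comp hρ)
      (fun x => by
        have h := congrArg φ (hunit x)
        rw [map_mul, map_star, map_one] at h
        have h2 := congrArg norm h
        rw [norm_mul, norm_star, norm_one] at h2
        nlinarith [norm_nonneg (φ (ρ x))])
      (fun x y => by simp only [hadd, map_mul])
    refine ⟨α, fun γ hγ => ?_, hα⟩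
    have h1 := hα γ
    simp only [hper γ hγ, map_one] at h1
    obtain ⟨n, hn⟩ := Complex.exp_eq_one_iff.1 h1.symm
    have h2 : ((α γ : ℝ) : ℂ) = n :=
      mul_left_cancel₀ Complex.two_pi_I_ne_zero (by rw [hn, mul_comm])
    exact ⟨n, by exact_mod_cast h2⟩
  choose α hαΓ hα using hlift
  have hinj : Function.Injective α := fun φ ψ h =>
    hsep φ ψ fun x => by rw [hα, hα, h]
  have : Countable (characterSpace ℂ A) :=
    have := hcount.to_subtype
    Function.Injective.countable (f := fun φ => (⟨α φ, hαΓ φ⟩ :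
      {α : z →L[ℝ] ℝ | ∀ γ ∈ Γ, ∃ n : ℤ, α γ = (n : ℝ)}))
      (fun φ ψ h => hinj (congrArg Subtype.val h))
  obtain ⟨φ, p, hp, hφ⟩ := exists_atom_of_countable_characterSpace (A := A)
  exact ⟨p, hp, α φ, hαΓ φ, fun x => by rw [hφ, hα]⟩

open WeakDual in
/-- Every nonzero norm-continuous unitary representation of `z / Γ` has a nonzero eigenvector, if
the dual of `z / Γ` is countable. -/
lemma exists_eigenvector {z : Type*} [NormedAddCommGroup z] [NormedSpace ℝ z]
    (Γ : AddSubgroup z)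
    (hcount : Set.Countable {α : z →L[ℝ] ℝ | ∀ γ ∈ Γ, ∃ n : ℤ, α γ = (n : ℝ)})
    {H : Type*} [NormedAddCommGroup H] [InnerProductSpace ℂ H] [CompleteSpace H] [Nontrivial H]
    (π : z → (H →L[ℂ] H))
    (hunit : ∀ x, π x ∈ unitary (H →L[ℂ] H))
    (hadd : ∀ x y, π (x + y) = π x * π y)
    (hper : ∀ γ ∈ Γ, π γ = 1)
    (hnormcont : Continuous π) :
    ∃ v : H, v ≠ 0 ∧ ∃ α : z →L[ℝ] ℝ, (∀ γ ∈ Γ, ∃ n : ℤ, α γ = (n : ℝ)) ∧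
        ∀ x, π x v = Complex.exp (2 * Real.pi * Complex.I * (α x : ℝ)) • v := by
  have hπ0 : π 0 = 1 := hper 0 Γ.zero_mem
  have hstar : ∀ x, star (π x) = π (-x) := fun x => by
    have h1 : π x * π (-x) = 1 := by rw [← hadd, add_neg_cancel, hπ0]
    calc star (π x) = star (π x) * (π x * π (-x)) := by rw [h1, mul_one]
      _ = π (-x) := by rw [← mul_assoc, Unitary.star_mul_self_of_mem (hunit x), one_mul]
  have hcomm : ∀ x y, π x * π y = π y * π x := fun x y => by rw [← hadd, ← hadd, add_comm]
  have hadj : IsMulCommutative (StarAlgebra.adjoin ℂ (Set.range π)) :=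
    StarAlgebra.isMulCommutative_adjoin ℂ
      (by rintro _ ⟨x, rfl⟩ _ ⟨y, rfl⟩; exact hcomm x y)
      (by rintro _ ⟨x, rfl⟩ _ ⟨y, rfl⟩; rw [hstar]; exact hcomm x _)
  let S : StarSubalgebra ℂ (H →L[ℂ] H) :=
    (StarAlgebra.adjoin ℂ (Set.range π)).topologicalClosure
  have hclosed : IsClosed (S : Set (H →L[ℂ] H)) :=
    StarSubalgebra.isClosed_topologicalClosure _
  let : CommCStarAlgebra S :=
    { StarSubalgebra.cstarAlgebra S with
      mul_comm := fun a b => (StarSubalgebra.commRingTopologicalClosure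
        (StarAlgebra.adjoin ℂ (Set.range π)) (fun x y => mul_comm' x y)).mul_comm a b }
  have hle : ∀ a ∈ StarAlgebra.adjoin ℂ (Set.range π), a ∈ S := fun a ha =>
    StarSubalgebra.le_topologicalClosure _ ha
  have hmem : ∀ x, π x ∈ S := fun x => hle _ (StarAlgebra.subset_adjoin ℂ _ ⟨x, rfl⟩)
  let ρ : z → S := fun x => ⟨π x, hmem x⟩
  have : Nontrivial S := ⟨0, 1, fun h => zero_ne_one (congrArg Subtype.val h)⟩
  have hsep : ∀ φ ψ : characterSpace ℂ S, (∀ x, φ (ρ x) = ψ (ρ x)) → φ = ψ := by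
    intro φ ψ hρeq
    have key : ∀ a (ha : a ∈ StarAlgebra.adjoin ℂ (Set.range π)),
        φ ⟨a, hle a ha⟩ = ψ ⟨a, hle a ha⟩ := by
      -- Since `range π` is closed under `star`, it generates the *-algebra as an algebra.
      intro a ha
      induction ha using Algebra.adjoin_induction with
      | mem a ha =>
        rcases ha with ⟨x, rfl⟩ | ⟨x, hx⟩
        · exact hρeq x
        · obtain rfl : a = π (-x) := by rw [← hstar, hx, star_star]
          exact hρeq (-x)
      | algebraMap r => exact (AlgHomClass.commutes φ r).trans (AlgHomClass.commutes ψ r).symm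
      | add a b ha hb iha ihb =>
        exact (map_add φ (⟨a, hle a ha⟩ : S) ⟨b, hle b hb⟩).trans
          ((congrArg₂ _ iha ihb).trans (map_add ψ _ _).symm)
      | mul a b ha hb iha ihb =>
        exact (map_mul φ (⟨a, hle a ha⟩ : S) ⟨b, hle b hb⟩).trans
          ((congrArg₂ _ iha ihb).trans (map_mul ψ _ _).symm)
    have hdense : DenseRange (Set.inclusion (StarSubalgebra.le_topologicalClosure
        (StarAlgebra.adjoin ℂ (Set.range π)))) :=
      (denseRange_inclusion_iff _).2 subset_rfl
    refine DFunLike.ext' (Continuous.ext_on hdense (map_continuous φ) (map_continuous ψ) ?_)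
    rintro _ ⟨a, rfl⟩
    exact key a a.2
  obtain ⟨p, hp, α, hα, h⟩ := exists_eigenprojection Γ hcount ρ (hnormcont.subtype_mk _)
    (fun x => Subtype.ext (Unitary.star_mul_self_of_mem (hunit x)))
    (fun x y => Subtype.ext (hadd x y)) (fun γ hγ => Subtype.ext (hper γ hγ)) hsep
  obtain ⟨w, hw⟩ : ∃ w, (p : H →L[ℂ] H) w ≠ 0 := by
    by_contra! h0
    exact hp (Subtype.ext (ContinuousLinearMap.ext h0))
  refine ⟨(p : H →L[ℂ] H) w, hw, α, hα, fun x => ?_⟩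
  exact congrArg (fun T : S => (T : H →L[ℂ] H) w) (h x)

/-- Discrete decomposition of bounded representations, abelian case: for a connected abelian
Banach–Lie group `Z = z/Γ` (`z` a Banach space, `Γ` a discrete subgroup) whose character group
`Ẑ ≅ {α ∈ z' : α(Γ) ⊆ ℤ}` is countable, every norm-continuous unitary representation of `Z`
(i.e. a norm-continuous unitary representation `π` of `z` that is trivial on `Γ`) is an
orthogonal Hilbert direct sum of `Z`-eigenspaces: the eigenvectors for characters of `Z`
span a dense subspace. -/
theorem stmt_6 {z : Type*} [NormedAddCommGroup z] [NormedSpace ℝ z] [CompleteSpace z]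
    (Γ : AddSubgroup z) (hΓdisc : ∃ ε > 0, ∀ γ ∈ Γ, γ ≠ 0 → ε ≤ ‖γ‖)
    (hcount : Set.Countable {α : z →L[ℝ] ℝ | ∀ γ ∈ Γ, ∃ n : ℤ, α γ = (n : ℝ)})
    {H : Type*} [NormedAddCommGroup H] [InnerProductSpace ℂ H] [CompleteSpace H]
    (π : z → (H →L[ℂ] H))
    (hunit : ∀ x, π x ∈ unitary (H →L[ℂ] H))
    (hadd : ∀ x y, π (x + y) = π x * π y)
    (hper : ∀ γ ∈ Γ, π γ = 1)
    (hnormcont : Continuous π) :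
    (Submodule.span ℂ {v : H | ∃ α : z →L[ℝ] ℝ, (∀ γ ∈ Γ, ∃ n : ℤ, α γ = (n : ℝ)) ∧
        ∀ x, π x v = Complex.exp (2 * Real.pi * Complex.I * (α x : ℝ)) • v}).topologicalClosure
      = ⊤ := by
  set V := Submodule.span ℂ {v : H | ∃ α : z →L[ℝ] ℝ, (∀ γ ∈ Γ, ∃ n : ℤ, α γ = (n : ℝ)) ∧
    ∀ x, π x v = Complex.exp (2 * Real.pi * Complex.I * (α x : ℝ)) • v} with hV
  rw [Submodule.topologicalClosure_eq_top_iff]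
  set K := Vᗮ with hK
  by_contra hne
  have : Nontrivial K := Submodule.nontrivial_iff_ne_bot.2 hne
  have hVinv : ∀ x, ∀ v ∈ V, π x v ∈ V := by
    intro x v hv
    induction hv using Submodule.span_induction with
    | mem v hv =>
      obtain ⟨α, hα, h⟩ := hv
      rw [h]
      exact V.smul_mem _ (Submodule.subset_span ⟨α, hα, h⟩)
    | zero => simp
    | add v w _ _ hv hw => rw [map_add]; exact V.add_mem hv hw
    | smul c v _ hv => rw [map_smul]; exact V.smul_mem c hv
  have hπ0 : π 0 = 1 := hper 0 Γ.zero_mem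
  have hinner : ∀ x v w, inner ℂ (π x v) (π x w) = inner ℂ v w := fun x v w => by
    rw [← ContinuousLinearMap.adjoint_inner_right, ← ContinuousLinearMap.star_eq_adjoint,
      ← mul_apply_eq_comp, Unitary.star_mul_self_of_mem (hunit x),
      one_apply_eq_self]
  have hcancel : ∀ x v, π x (π (-x) v) = v := fun x v => by
    rw [← mul_apply_eq_comp, ← hadd, add_neg_cancel, hπ0,
      one_apply_eq_self]
  have hKinv : ∀ x, ∀ v ∈ K, π x v ∈ K := by
    intro x v hv
    rw [hK, Submodule.mem_orthogonal]
    intro u hu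
    rw [← hcancel x u, hinner]
    exact (Submodule.mem_orthogonal _ _).1 hv _ (hVinv _ _ hu)
  -- The subrepresentation on `K`, written as a compression so that norm continuity is evident.
  let σ : z → (K →L[ℂ] K) := fun x => K.orthogonalProjectionOnto ∘L π x ∘L K.subtypeL
  have hσ : ∀ x (v : K), ((σ x v : K) : H) = π x v := fun x v =>
    Submodule.starProjection_eq_self_iff.2 (hKinv x v v.2)
  have hσadd : ∀ x y, σ (x + y) = σ x * σ y := fun x y => by
    ext v
    simp [hσ, hadd]
  have hσper : ∀ γ ∈ Γ, σ γ = 1 := fun γ hγ => by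
    ext v
    simp [hσ, hper γ hγ]
  have hσstar : ∀ x, star (σ x) = σ (-x) := fun x => by
    rw [ContinuousLinearMap.star_eq_adjoint, eq_comm, ContinuousLinearMap.eq_adjoint_iff]
    intro v w
    rw [Submodule.coe_inner, Submodule.coe_inner, hσ, hσ, ← hinner x, hcancel]
  have hσunit : ∀ x, σ x ∈ unitary (K →L[ℂ] K) := fun x => by
    rw [Unitary.mem_iff, hσstar, ← hσadd, ← hσadd, neg_add_cancel, add_neg_cancel,
      hσper 0 Γ.zero_mem]
    exact ⟨rfl, rfl⟩
  have hσcont : Continuous σ := by fun_prop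
  obtain ⟨v, hv, α, hα, h⟩ := exists_eigenvector Γ hcount σ hσunit hσadd hσper hσcont
  have hvV : (v : H) ∈ V :=
    Submodule.subset_span ⟨α, hα, fun x => by rw [← hσ, h]; rfl⟩
  exact hv (Subtype.ext (inner_self_eq_zero.1 ((Submodule.mem_orthogonal _ _).1 v.2 _ hvV)))
end

section
/- Let g be a Hilbert–Lie algebra. The cocycle ω_d(x,y) := tr(d·[x,y]) on u₂(H), for d ∈ u(H), is a continuous Lie algebra 2-cocycle, and ω_d is a coboundary if and only if d ∈ ℝ·i1 + u₂(H); consequently H²(u₂(H), ℝ) ≅ u(H)/(ℝ i1 + u₂(H)). -/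
/-!
Write `B₂(H)` for the algebra of Hilbert–Schmidt operators, which is `gl₂(H) = u₂(H) ⊕ i u₂(H)` as
a complex Lie algebra. Evaluation on a Hilbert basis embeds it isometrically in `ℓ²(J, H)`, and
`tr (x y) = ⟪star x, y⟫₂` is a symmetric associative form on it. The series `tr (d [x, y])` equals
`tr ((d x) y) - tr ((d y) x)`, where both factors of each product are Hilbert–Schmidt, and this
gives skew-symmetry, the cocycle identity and the bound `2 ‖d‖ ‖x‖₂ ‖y‖₂`.

If `ω_d = ω_b` with `b ∈ u₂(H)`, put `c = d - b`. Then `0 = tr (c [x, y]) = tr ([c, x] y)` on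
`u₂(H)`, and taking `y = [c, x] ∈ u₂(H)` gives `‖[c, x]‖₂ = 0`. So `c` commutes with `B₂(H)`, in
particular with rank-one operators, and is a scalar, purely imaginary because `c` is skew-adjoint
(`eq_smul_one_of_form_eq_zero`). Conversely `ω_{i1} = 0` since the trace form is symmetric.

A continuous real cocycle on `u₂(H)` extends to a continuous complex-bilinear cocycle `Ω` on
`B₂(H)`. For a unit vector `o`, the bounded form `Ω(|u⟩⟨o|, |o⟩⟨v|)` is `⟪v, d u⟫` for a bounded
operator `d`, and `Ω` minus `tr (d [x, y])` is a cocycle that vanishes on all such pairs. The cocycle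
identity with the projection `|o⟩⟨o|`, whose adjoint action grades `B₂(H)`, then makes it vanish on
all pairs of rank-one operators (`cocycle_r_eq_zero`), hence everywhere, as these span a dense
subspace (`exists_form_eq`). Finally `d` is replaced by its skew-adjoint part
(`exists_form_of_real`).
-/

open scoped ComplexInnerProductSpace

/-- The trace of an operator with respect to a Hilbert basis. -/
noncomputable def opTrace {H : Type} [NormedAddCommGroup H] [InnerProductSpace ℂ H]
    [CompleteSpace H] {J : Type} (e : HilbertBasis J ℂ H) (X : H →L[ℂ] H) : ℂ :=
  ∑' j, ⟪e j, X (e j)⟫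

/-- Membership in `u₂(H)`: skew-adjoint and Hilbert–Schmidt. -/
def skewHS {H : Type} [NormedAddCommGroup H] [InnerProductSpace ℂ H] [CompleteSpace H]
    {J : Type} (e : HilbertBasis J ℂ H) (x : H →L[ℂ] H) : Prop :=
  star x = -x ∧ Summable (fun j => ‖x (e j)‖ ^ 2)

/-- The cocycle `ω_d(x,y) = tr(d [x,y])` on `u₂(H)`, for `d ∈ u(H)`. -/
noncomputable def omegaD {H : Type} [NormedAddCommGroup H] [InnerProductSpace ℂ H]
    [CompleteSpace H] {J : Type} (e : HilbertBasis J ℂ H) (d x y : H →L[ℂ] H) : ℝ :=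
  (opTrace e (d * ⁅x, y⁆)).re

namespace HilbertSchmidt

open Filter Topology InnerProductSpace
open scoped InnerProduct

section Basic

variable {H : Type} [NormedAddCommGroup H] [InnerProductSpace ℂ H] [CompleteSpace H] {J : Type}

/-! ### Hilbert–Schmidt operators and the trace form -/

/-- Parseval's identity in `ℝ≥0∞`. -/
lemma tsum_enorm_sq (e : HilbertBasis J ℂ H) (v : H) :
    ∑' k, ‖⟪e k, v⟫‖ₑ ^ 2 = ‖v‖ₑ ^ 2 := by
  have h := lp.hasSum_norm (p := 2) (by norm_num) (e.repr v)
  simp only [ENNReal.toReal_ofNat, Real.rpow_ofNat, LinearIsometryEquiv.norm_map,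
    e.repr_apply_apply] at h
  have h2 := congrArg ENNReal.ofReal h.tsum_eq
  rw [ENNReal.ofReal_tsum_of_nonneg (fun _ => by positivity) h.summable] at h2
  simpa [ENNReal.ofReal_pow, ofReal_norm] using h2

/-- The Hilbert–Schmidt norm of the adjoint: both sides are `∑ j k, |⟪e k, x (e j)⟫|²`. -/
lemma tsum_enorm_star (e : HilbertBasis J ℂ H) (x : H →L[ℂ] H) :
    ∑' j, ‖star x (e j)‖ₑ ^ 2 = ∑' j, ‖x (e j)‖ₑ ^ 2 := by
  simp_rw [← tsum_enorm_sq e]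
  rw [ENNReal.tsum_comm]
  refine tsum_congr fun j => tsum_congr fun k => ?_
  rw [ContinuousLinearMap.star_eq_adjoint, ContinuousLinearMap.adjoint_inner_right,
    ← inner_conj_symm]
  congr 1
  exact RCLike.enorm_conj _

lemma summable_iff (e : HilbertBasis J ℂ H) (x : H →L[ℂ] H) :
    Summable (fun j => ‖x (e j)‖ ^ 2) ↔ ∑' j, ‖x (e j)‖ₑ ^ 2 ≠ ⊤ := by
  have : ∀ j, ‖x (e j)‖ₑ ^ 2 = ENNReal.ofReal (‖x (e j)‖ ^ 2) := fun j => by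
    rw [ENNReal.ofReal_pow (norm_nonneg _), ofReal_norm]
  simp_rw [this]
  constructor
  · intro h; exact h.tsum_ofReal_ne_top
  · intro h
    have := ENNReal.summable_toReal h
    simpa using this

lemma summable_star (e : HilbertBasis J ℂ H) {x : H →L[ℂ] H}
    (h : Summable (fun j => ‖x (e j)‖ ^ 2)) : Summable (fun j => ‖star x (e j)‖ ^ 2) := by
  rw [summable_iff] at h ⊢
  rwa [tsum_enorm_star]

lemma memlp_iff {f : J → H} : Memℓp (E := fun _ => H) f 2 ↔ Summable (fun j => ‖f j‖ ^ 2) := by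
  rw [memℓp_gen_iff (by norm_num)]; simp

lemma summable_mul_left (e : HilbertBasis J ℂ H) (d : H →L[ℂ] H) {x : H →L[ℂ] H}
    (h : Summable (fun j => ‖x (e j)‖ ^ 2)) : Summable (fun j => ‖(d * x) (e j)‖ ^ 2) := by
  refine Summable.of_nonneg_of_le (fun _ => by positivity) (fun j => ?_) (h.mul_left (‖d‖ ^ 2))
  rw [← mul_pow]
  gcongr
  exact d.le_opNorm _

/-- The algebra `B₂(H)` of Hilbert–Schmidt operators, a non-unital star subalgebra of `B(H)`. -/
def HS (e : HilbertBasis J ℂ H) : NonUnitalStarSubalgebra ℂ (H →L[ℂ] H) where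
  carrier := {x | Summable (fun j => ‖x (e j)‖ ^ 2)}
  add_mem' {x y} hx hy := by
    simp only [Set.mem_ofPred_eq, ← memlp_iff] at *
    exact hx.add hy
  zero_mem' := by simp
  mul_mem' {x y} _ hy := summable_mul_left e x hy
  smul_mem' c x hx := by
    simp only [Set.mem_ofPred_eq, ← memlp_iff] at *
    exact hx.const_smul c
  star_mem' hx := summable_star e hx

variable {e : HilbertBasis J ℂ H}

variable (e) in
/-- Restriction to the basis, an isometric embedding of `B₂(H)` into `ℓ²(J, H)`. -/
noncomputable def toLp : HS e →ₗ[ℂ] lp (fun _ : J => H) 2 where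
  toFun x := ⟨fun j => x.1 (e j), memlp_iff.2 x.2⟩
  map_add' _ _ := rfl
  map_smul' _ _ := rfl

@[simp] lemma toLp_apply (x : HS e) (j : J) : toLp e x j = x.1 (e j) := rfl

lemma norm_toLp_sq (x : HS e) : ‖toLp e x‖ ^ 2 = ∑' j, ‖x.1 (e j)‖ ^ 2 := by
  have := lp.norm_rpow_eq_tsum (p := 2) (by norm_num) (toLp e x)
  simpa using this

lemma norm_toLp (x : HS e) : ‖toLp e x‖ = Real.sqrt (∑' j, ‖x.1 (e j)‖ ^ 2) := by
  rw [← norm_toLp_sq, Real.sqrt_sq (norm_nonneg _)]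

lemma norm_toLp_star (x : HS e) : ‖toLp e (star x)‖ = ‖toLp e x‖ := by
  have key : ∀ z : HS e, ‖toLp e z‖ ^ 2 = (∑' j, ‖z.1 (e j)‖ₑ ^ 2).toReal := fun z => by
    rw [norm_toLp_sq, ENNReal.tsum_toReal_eq]
    · simp
    · intro j; simp
  have : ‖toLp e (star x)‖ ^ 2 = ‖toLp e x‖ ^ 2 := by
    rw [key, key]; congr 1; exact tsum_enorm_star e x.1
  exact (sq_eq_sq₀ (norm_nonneg _) (norm_nonneg _)).1 this

variable (e) in
/-- Left multiplication by a bounded operator on `B₂(H)`. -/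
noncomputable def lmul (d : H →L[ℂ] H) : HS e →ₗ[ℂ] HS e where
  toFun x := ⟨d * x.1, summable_mul_left e d x.2⟩
  map_add' x y := Subtype.ext (mul_add d x.1 y.1)
  map_smul' c x := Subtype.ext (mul_smul_comm c d x.1)

@[simp] lemma coe_lmul (d : H →L[ℂ] H) (x : HS e) : (lmul e d x : H →L[ℂ] H) = d * x := rfl

lemma lmul_mul (d : H →L[ℂ] H) (x y : HS e) : lmul e d (x * y) = lmul e d x * y :=
  Subtype.ext (mul_assoc d x.1 y.1).symm

lemma mem_mul_right {x : H →L[ℂ] H} (hx : x ∈ HS e) (d : H →L[ℂ] H) : x * d ∈ HS e := by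
  have h := (HS e).star_mem' (summable_mul_left e (star d) ((HS e).star_mem' hx))
  simpa using h

lemma norm_lmul_le (d : H →L[ℂ] H) (x : HS e) : ‖toLp e (lmul e d x)‖ ≤ ‖d‖ * ‖toLp e x‖ := by
  rw [← sq_le_sq₀ (norm_nonneg _) (by positivity), mul_pow, norm_toLp_sq, norm_toLp_sq,
    ← tsum_mul_left]
  refine Summable.tsum_le_tsum (fun j => ?_) (lmul e d x).2 (x.2.mul_left _)
  rw [← mul_pow]
  gcongr
  exact d.le_opNorm _

variable (e) in
/-- The trace form `(x, y) ↦ tr (x y)` on `B₂(H)`. -/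
noncomputable def trForm : HS e →ₗ[ℂ] HS e →ₗ[ℂ] ℂ :=
  LinearMap.mk₂ ℂ (fun x y => ⟪toLp e (star x), toLp e y⟫)
    (fun x x' y => by simp)
    (fun c x y => by simp [mul_comm])
    (fun x y y' => by simp)
    (fun c x y => by simp)

lemma trForm_apply (x y : HS e) : trForm e x y = ⟪toLp e (star x), toLp e y⟫ := rfl

lemma hasSum_trForm (x y : HS e) : HasSum (fun j => ⟪e j, (x.1 * y.1) (e j)⟫) (trForm e x y) := by
  convert! lp.hasSum_inner (𝕜 := ℂ) (toLp e (star x)) (toLp e y) using 2 with j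
  simp [ContinuousLinearMap.star_eq_adjoint, ContinuousLinearMap.adjoint_inner_left]

lemma opTrace_mul (x y : HS e) : opTrace e (x.1 * y.1) = trForm e x y := (hasSum_trForm x y).tsum_eq

lemma trForm_assoc (x y z : HS e) : trForm e (x * y) z = trForm e x (y * z) := by
  rw [← opTrace_mul, ← opTrace_mul]; exact congrArg _ (mul_assoc x.1 y.1 z.1)

/-- `tr (x y) = tr (y x)`: by polarization, since the adjoint preserves the Hilbert–Schmidt
norm. -/
lemma trForm_comm (x y : HS e) : trForm e x y = trForm e y x := by
  have h1 : ‖toLp e (star x) + toLp e y‖ = ‖toLp e (star y) + toLp e x‖ := by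
    rw [← map_add, ← map_add, ← norm_toLp_star, star_add, star_star, add_comm]
  have h2 : ‖toLp e (star x) - toLp e y‖ = ‖toLp e (star y) - toLp e x‖ := by
    rw [← map_sub, ← map_sub, ← norm_toLp_star, star_sub, star_star, map_sub, norm_sub_rev,
      ← map_sub]
  have h3 : ‖toLp e (star x) - Complex.I • toLp e y‖
      = ‖toLp e (star y) - Complex.I • toLp e x‖ := by
    rw [← map_smul, ← map_smul, ← map_sub, ← map_sub, ← norm_toLp_star]
    have : star (star x - Complex.I • y) = Complex.I • (star y - Complex.I • x) := by
      simp [smul_sub, smul_smul, add_comm]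
    rw [this, map_smul, norm_smul, Complex.norm_I, one_mul]
  have h4 : ‖toLp e (star x) + Complex.I • toLp e y‖
      = ‖toLp e (star y) + Complex.I • toLp e x‖ := by
    rw [← map_smul, ← map_smul, ← map_add, ← map_add, ← norm_toLp_star]
    have : star (star x + Complex.I • y) = (-Complex.I) • (star y + Complex.I • x) := by
      simp [smul_add, smul_smul, add_comm]
    rw [this, map_smul, norm_smul, norm_neg, Complex.norm_I, one_mul]
  rw [trForm_apply, trForm_apply, inner_eq_sum_norm_sq_div_four, inner_eq_sum_norm_sq_div_four,
    h1, h2]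
  simp only [RCLike.I_to_complex]
  rw [h3, h4]

lemma norm_trForm_le (x y : HS e) : ‖trForm e x y‖ ≤ ‖toLp e x‖ * ‖toLp e y‖ := by
  rw [trForm_apply, ← norm_toLp_star x]
  exact norm_inner_le_norm _ _

/-! ### Rank-one operators -/

variable (e) in
/-- The rank-one operator `w ↦ ⟪v, w⟫ u`, as an element of `B₂(H)`. -/
noncomputable def r (u v : H) : HS e :=
  ⟨rankOne ℂ u v, by
    have h := (lp.hasSum_norm (p := 2) (by norm_num) (e.repr v)).summable
    simp only [ENNReal.toReal_ofNat, Real.rpow_ofNat, e.repr_apply_apply] at h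
    refine (h.mul_right (‖u‖ ^ 2)).congr fun j => ?_
    rw [rankOne_apply, norm_smul, mul_pow, norm_inner_symm]⟩

@[simp] lemma coe_r (u v : H) : (r e u v : H →L[ℂ] H) = rankOne ℂ u v := rfl

lemma r_add_left (u u' v : H) : r e (u + u') v = r e u v + r e u' v := Subtype.ext (by simp)

lemma r_smul_left (c : ℂ) (u v : H) : r e (c • u) v = c • r e u v := Subtype.ext (by simp)

lemma r_add_right (u v v' : H) : r e u (v + v') = r e u v + r e u v' := Subtype.ext (by simp)

lemma r_smul_right (c : ℂ) (u v : H) : r e u (c • v) = (starRingEnd ℂ c) • r e u v :=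
  Subtype.ext (by simp)

lemma r_mul_r (u v w z : H) : r e u v * r e w z = ⟪v, w⟫ • r e u z :=
  Subtype.ext (by ext; simp [smul_smul, mul_comm])

lemma star_r (u v : H) : star (r e u v) = r e v u :=
  Subtype.ext (by
    change star (rankOne ℂ u v) = rankOne ℂ v u
    rw [ContinuousLinearMap.star_eq_adjoint, adjoint_rankOne])

lemma lmul_r (d : H →L[ℂ] H) (u v : H) : lmul e d (r e u v) = r e (d u) v :=
  Subtype.ext (by ext; simp)

lemma toLp_r [DecidableEq J] (u : H) (k : J) : toLp e (r e u (e k)) = lp.single 2 k u := by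
  ext j
  rw [toLp_apply, coe_r, rankOne_apply, orthonormal_iff_ite.1 e.orthonormal]
  by_cases h : j = k
  · subst h; simp
  · simp [h, Ne.symm h]

lemma norm_toLp_r (u : H) (k : J) : ‖toLp e (r e u (e k))‖ = ‖u‖ := by
  classical
  rw [toLp_r, lp.norm_single (by norm_num)]

lemma norm_toLp_r' (u : H) (k : J) : ‖toLp e (r e (e k) u)‖ = ‖u‖ := by
  rw [← star_r, norm_toLp_star, norm_toLp_r]

lemma trForm_r (x : HS e) (u v : H) : trForm e x (r e u v) = ⟪v, x.1 u⟫ := by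
  refine (hasSum_trForm x (r e u v)).unique ?_
  convert! e.hasSum_inner_mul_inner v (x.1 u) using 2 with j
  simp

/-- Rank-one operators span a dense subspace of `B₂(H)`: a Hilbert–Schmidt-continuous linear
functional that vanishes on them is zero. -/
lemma eq_zero_of_r (f : HS e →ₗ[ℂ] ℂ) (C : ℝ) (hC : ∀ x, ‖f x‖ ≤ C * ‖toLp e x‖)
    (h : ∀ u v, f (r e u v) = 0) : f = 0 := by
  classical
  ext x
  have h1 := lp.hasSum_single (p := 2) (by norm_num) (toLp e x)
  have h2 : Tendsto (fun s : Finset J => C * ‖toLp e x - ∑ k ∈ s, lp.single 2 k (toLp e x k)‖)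
      atTop (𝓝 (C * ‖toLp e x - toLp e x‖)) := ((tendsto_const_nhds.sub h1).norm).const_mul C
  rw [sub_self, norm_zero, mul_zero] at h2
  have h3 : ‖f x‖ ≤ 0 := by
    refine ge_of_tendsto' h2 fun s => ?_
    have : f x = f (x - ∑ k ∈ s, r e (x.1 (e k)) (e k)) := by simp [h]
    rw [this]
    refine (hC _).trans_eq ?_
    simp [toLp_r]
  simpa using h3

/-- Bilinear version of `eq_zero_of_r`. -/
lemma eq_zero_of_r₂ (f : HS e →ₗ[ℂ] HS e →ₗ[ℂ] ℂ) (C : ℝ)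
    (hC : ∀ x y, ‖f x y‖ ≤ C * ‖toLp e x‖ * ‖toLp e y‖)
    (h : ∀ u v w z, f (r e u v) (r e w z) = 0) : f = 0 := by
  ext x y
  have h1 : ∀ u v, f (r e u v) = 0 := fun u v =>
    eq_zero_of_r _ (C * ‖toLp e (r e u v)‖) (hC _) (h u v)
  have h2 : f.flip y = 0 := by
    refine eq_zero_of_r _ (C * ‖toLp e y‖) (fun x => ?_) fun u v => by simp [h1]
    rw [mul_right_comm]
    exact hC x y
  exact LinearMap.congr_fun h2 x

/-- A cocycle on `B₂(H)` vanishing on all pairs `(|u⟩⟨o|, |o⟩⟨v|)` vanishes on rank-one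
operators. The projection `|o⟩⟨o|` is the grading element: it acts with weight `-1` on
`|u⟩⟨o|`, with weight `1` on `|o⟩⟨v|` and with weight `0` on `|u⟩⟨v|`, for `u, v ⊥ o`, and the
cocycle identity makes the form invariant under it. -/
lemma cocycle_r_eq_zero (Ω : HS e →ₗ[ℂ] HS e →ₗ[ℂ] ℂ) (hskew : ∀ x y, Ω x y = - Ω y x)
    (hcoc : ∀ x y z, Ω (x * y - y * x) z + Ω (y * z - z * y) x + Ω (z * x - x * z) y = 0)
    (o : H) (ho : ‖o‖ = 1) (h : ∀ u v, Ω (r e u o) (r e o v) = 0) (u v w z : H) :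
    Ω (r e u v) (r e w z) = 0 := by
  have hoo : ⟪o, o⟫ = 1 := by rw [inner_self_eq_norm_sq_to_K, ho]; simp
  have h' : ∀ u v, Ω (r e o v) (r e u o) = 0 := fun u v => by rw [hskew, h, neg_zero]
  -- every vector splits into a multiple of `o` and a vector orthogonal to it
  have split : ∀ u : H, ∃ (c : ℂ) (u' : H), ⟪o, u'⟫ = 0 ∧ ⟪u', o⟫ = 0 ∧ u = c • o + u' := by
    intro u
    have : ⟪o, u - ⟪o, u⟫ • o⟫ = 0 := by rw [inner_sub_right, inner_smul_right, hoo]; simp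
    exact ⟨⟪o, u⟫, u - ⟪o, u⟫ • o, this, inner_eq_zero_symm.1 this, by simp⟩
  -- columns: `|u⟩⟨o|`
  have ha0 : ∀ u w : H, ⟪o, u⟫ = 0 → ⟪o, w⟫ = 0 → Ω (r e u o) (r e w o) = 0 := by
    intro u w hu hw
    have := hcoc (r e o o) (r e u o) (r e w o)
    simp [r_mul_r, hu, hw, ho] at this
    have h2 := hskew (r e w o) (r e u o)
    linear_combination (-1/2) * this + (1/2) * h2
  have ha : ∀ u w : H, Ω (r e u o) (r e w o) = 0 := by
    intro u w
    obtain ⟨c, u', hu, -, rfl⟩ := split u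
    obtain ⟨c', w', hw, -, rfl⟩ := split w
    simp [r_add_left, r_smul_left, h, h', ha0 _ _ hu hw]
  -- rows: `|o⟩⟨u|`
  have hb0 : ∀ u w : H, ⟪u, o⟫ = 0 → ⟪w, o⟫ = 0 → Ω (r e o u) (r e o w) = 0 := by
    intro u w hu hw
    have := hcoc (r e o o) (r e o u) (r e o w)
    simp [r_mul_r, hu, hw, ho] at this
    have h2 := hskew (r e o w) (r e o u)
    linear_combination (1/2) * this + (1/2) * h2
  have hb : ∀ u w : H, Ω (r e o u) (r e o w) = 0 := by
    intro u w
    obtain ⟨c, u', -, hu, rfl⟩ := split u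
    obtain ⟨c', w', -, hw, rfl⟩ := split w
    simp [r_add_right, r_smul_right, h, h', hb0 _ _ hu hw]
  -- a general rank-one operator against columns
  have hF : ∀ u v w : H, Ω (r e u v) (r e w o) = Ω (r e w v) (r e u o) := by
    intro u v w
    have := hcoc (r e u o) (r e o v) (r e w o)
    simp [r_mul_r, ho, h, h'] at this
    linear_combination this
  have hp : ∀ u v : H, Ω (r e u v) (r e o o) = 0 := by
    intro u v; rw [hF, h']
  have hRa0 : ∀ u v w : H, ⟪o, u⟫ = 0 → ⟪v, o⟫ = 0 → ⟪o, w⟫ = 0 →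
      Ω (r e u v) (r e w o) = 0 := by
    intro u v w hu hv hw
    have := hcoc (r e o o) (r e u v) (r e w o)
    simp [r_mul_r, hu, hv, hw, ho, hp] at this
    rw [hskew, this, neg_zero]
  have hRa : ∀ u v w : H, Ω (r e u v) (r e w o) = 0 := by
    intro u v w
    obtain ⟨c, u', hu, -, rfl⟩ := split u
    obtain ⟨c', v', -, hv, rfl⟩ := split v
    obtain ⟨c'', w', hw, -, rfl⟩ := split w
    simp [r_add_left, r_smul_left, r_add_right, r_smul_right, h', ha, hp, hRa0 _ _ _ hu hv hw]
  -- a general rank-one operator against rows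
  have hG : ∀ u v w : H, Ω (r e u v) (r e o w) = Ω (r e u w) (r e o v) := by
    intro u v w
    have := hcoc (r e u o) (r e o v) (r e o w)
    simp [r_mul_r, ho, h, h'] at this
    linear_combination this
  have hRb0 : ∀ u v w : H, ⟪o, u⟫ = 0 → ⟪v, o⟫ = 0 → ⟪w, o⟫ = 0 →
      Ω (r e u v) (r e o w) = 0 := by
    intro u v w hu hv hw
    have := hcoc (r e o o) (r e u v) (r e o w)
    simp [r_mul_r, hu, hv, hw, ho, hp] at this
    rw [hskew, this, neg_zero]
  have hRb : ∀ u v w : H, Ω (r e u v) (r e o w) = 0 := by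
    intro u v w
    obtain ⟨c, u', hu, -, rfl⟩ := split u
    obtain ⟨c', v', -, hv, rfl⟩ := split v
    obtain ⟨c'', w', -, hw, rfl⟩ := split w
    simp [r_add_left, r_smul_left, r_add_right, r_smul_right, h, hb, hp, hRb0 _ _ _ hu hv hw]
  have hp' : ∀ u v : H, Ω (r e o o) (r e u v) = 0 := by
    intro u v; rw [hskew, hp, neg_zero]
  have := hcoc (r e w o) (r e o z) (r e u v)
  simp [r_mul_r, ho, hRa, hRb, hp'] at this
  rw [hskew, this, neg_zero]

lemma eq_zero_of_norm_toLp {x : HS e} (h : ‖toLp e x‖ = 0) : x = 0 := by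
  have h0 : toLp e x = 0 := norm_eq_zero.1 h
  refine Subtype.ext (ContinuousLinearMap.ext_on (s := Set.range e) ?_ ?_)
  · exact Submodule.dense_iff_topologicalClosure_eq_top.2 e.dense_span
  · rintro _ ⟨j, rfl⟩
    have := congrArg (fun f : lp (fun _ : J => H) 2 => f j) h0
    simpa using this

variable (e) in
/-- Right multiplication by a bounded operator on `B₂(H)`. -/
noncomputable def rmul (d : H →L[ℂ] H) : HS e →ₗ[ℂ] HS e where
  toFun x := ⟨x.1 * d, mem_mul_right x.2 d⟩
  map_add' x y := Subtype.ext (add_mul x.1 y.1 d)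
  map_smul' c x := Subtype.ext (smul_mul_assoc c x.1 d)

@[simp] lemma coe_rmul (d : H →L[ℂ] H) (x : HS e) : (rmul e d x : H →L[ℂ] H) = x * d := rfl

lemma star_lmul (d : H →L[ℂ] H) (x : HS e) : star (lmul e d x) = rmul e (star d) (star x) :=
  Subtype.ext (star_mul d x.1)

lemma star_rmul (d : H →L[ℂ] H) (x : HS e) : star (rmul e d x) = lmul e (star d) (star x) :=
  Subtype.ext (star_mul x.1 d)

lemma trForm_rmul (d : H →L[ℂ] H) (x y : HS e) :
    trForm e (rmul e d x) y = trForm e x (lmul e d y) := by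
  rw [← opTrace_mul, ← opTrace_mul]; exact congrArg _ (mul_assoc x.1 d y.1)

/-- `tr (x y)` and `tr ((x y)^*)` are complex conjugates. -/
lemma conj_trForm (x y : HS e) :
    (starRingEnd ℂ) (trForm e x y) = trForm e (star y) (star x) := by
  rw [trForm_apply, trForm_apply, inner_conj_symm, star_star]

/-! ### The cocycle attached to a bounded operator -/

variable (e) in
/-- The complex-bilinear form `(x, y) ↦ tr (d [x, y])` on `B₂(H)`. -/
noncomputable def form (d : H →L[ℂ] H) : HS e →ₗ[ℂ] HS e →ₗ[ℂ] ℂ :=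
  (trForm e ∘ₗ lmul e d) - (trForm e ∘ₗ lmul e d).flip

lemma form_apply (d : H →L[ℂ] H) (x y : HS e) :
    form e d x y = trForm e (lmul e d x) y - trForm e (lmul e d y) x := rfl

lemma omegaD_eq (d : H →L[ℂ] H) (x y : HS e) : omegaD e d x.1 y.1 = (form e d x y).re := by
  have h := (hasSum_trForm (lmul e d x) y).sub (hasSum_trForm (lmul e d y) x)
  rw [form_apply, ← h.tsum_eq, omegaD, opTrace]
  congr 2
  ext j
  rw [← inner_sub_right, Ring.lie_def]
  simp [inner_sub_right]

lemma form_skew (d : H →L[ℂ] H) (x y : HS e) : form e d x y = - form e d y x := by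
  simp [form_apply]

lemma form_cocycle (d : H →L[ℂ] H) (x y z : HS e) :
    form e d (x * y - y * x) z + form e d (y * z - z * y) x + form e d (z * x - x * z) y = 0 := by
  simp only [form_apply, map_sub, LinearMap.sub_apply, lmul_mul, trForm_assoc]
  ring

lemma norm_form_le (d : H →L[ℂ] H) (x y : HS e) :
    ‖form e d x y‖ ≤ 2 * ‖d‖ * ‖toLp e x‖ * ‖toLp e y‖ := by
  have h1 := (norm_trForm_le (lmul e d x) y).trans
    (mul_le_mul_of_nonneg_right (norm_lmul_le d x) (norm_nonneg _))
  have h2 := (norm_trForm_le (lmul e d y) x).trans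
    (mul_le_mul_of_nonneg_right (norm_lmul_le d y) (norm_nonneg _))
  rw [form_apply]
  refine (norm_sub_le _ _).trans ?_
  linarith

lemma form_sub (d d' : H →L[ℂ] H) (x y : HS e) :
    form e (d - d') x y = form e d x y - form e d' x y := by
  have : ∀ x, lmul e (d - d') x = lmul e d x - lmul e d' x := fun x => Subtype.ext (sub_mul ..)
  simp only [form_apply, this, map_sub, LinearMap.sub_apply]; ring

lemma form_smul (c : ℂ) (d : H →L[ℂ] H) (x y : HS e) :
    form e (c • d) x y = c * form e d x y := by
  have : ∀ x, lmul e (c • d) x = c • lmul e d x := fun x => Subtype.ext (smul_mul_assoc ..)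
  simp only [form_apply, this, map_smul, LinearMap.smul_apply, smul_eq_mul]; ring

lemma form_one (x y : HS e) : form e 1 x y = 0 := by
  have : ∀ x, lmul e 1 x = x := fun x => Subtype.ext (one_mul x.1)
  rw [form_apply, this, this, trForm_comm, sub_self]

/-- On `u₂(H)`, passing from `d` to `-star d` conjugates `tr (d [x, y])`, so the skew-adjoint part of
`d` accounts for its real part. -/
lemma form_star (d : H →L[ℂ] H) {x y : HS e} (hx : star x = -x) (hy : star y = -y) :
    form e (star d) x y = - (starRingEnd ℂ) (form e d x y) := by
  have : ∀ x y : HS e, star x = -x → star y = -y →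
      trForm e (lmul e (star d) x) y = (starRingEnd ℂ) (trForm e (lmul e d y) x) := by
    intro x y hx hy
    rw [conj_trForm, star_lmul, hx, hy, trForm_comm (-x), trForm_rmul, trForm_comm]
    simp
  rw [form_apply, form_apply, this x y hx hy, this y x hy hx, map_sub]; ring

/-- `tr (d [x, y]) = tr ([d, x] y)`. -/
lemma form_eq_commutator (d : H →L[ℂ] H) (x y : HS e) :
    form e d x y = trForm e (lmul e d x - rmul e d x) y := by
  rw [form_apply, map_sub, LinearMap.sub_apply, trForm_rmul, trForm_comm x]

/-! ### Complexification -/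

/-- `B₂(H) = u₂(H) ⊕ i u₂(H)`. -/
lemma exists_skew_add (x : HS e) :
    ∃ a b : HS e, star a = -a ∧ star b = -b ∧ x = a + Complex.I • b := by
  refine ⟨(1 / 2 : ℂ) • (x - star x), (-Complex.I / 2 : ℂ) • (x + star x), ?_, ?_, ?_⟩
  · simp [← smul_neg]
  · simp [add_comm, ← neg_smul, neg_div]
  · have : Complex.I * (-Complex.I / 2) = 1 / 2 := by
      linear_combination (-1 / 2) * Complex.I_mul_I
    rw [smul_smul, this]
    module

/-- A real-bilinear form on a complex vector space, extended to a complex-bilinear form by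
applying `f ↦ (x ↦ f x - i f (i x))` in each variable. -/
lemma exists_complexify {V : Type*} [AddCommGroup V] [Module ℂ V] (w : V → V → ℝ)
    (hadd : ∀ x x' y, w (x + x') y = w x y + w x' y)
    (hadd' : ∀ x y y', w x (y + y') = w x y + w x y')
    (hsmul : ∀ (t : ℝ) x y, w ((t : ℂ) • x) y = t * w x y)
    (hsmul' : ∀ (t : ℝ) x y, w x ((t : ℂ) • y) = t * w x y) :
    ∃ Ω : V →ₗ[ℂ] V →ₗ[ℂ] ℂ, ∀ x y, Ω x y = (w x y : ℂ) - Complex.I * w (Complex.I • x) y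
      - Complex.I * w x (Complex.I • y) - w (Complex.I • x) (Complex.I • y) := by
  have hc : ∀ (c : ℂ) (x : V), c • x = (c.re : ℂ) • x + (c.im : ℂ) • Complex.I • x := by
    intro c x
    conv_lhs => rw [← Complex.re_add_im c]
    rw [add_smul, smul_smul]
  have hI : ∀ (c : ℂ) (x : V), Complex.I • c • x
      = (c.re : ℂ) • Complex.I • x + ((-c.im : ℝ) : ℂ) • x := by
    intro c x
    conv_lhs => rw [← Complex.re_add_im c]
    rw [smul_smul, smul_smul, ← add_smul]
    congr 1
    push_cast
    linear_combination (c.im : ℂ) * Complex.I_mul_I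
  refine ⟨LinearMap.mk₂ ℂ (fun x y => (w x y : ℂ) - Complex.I * w (Complex.I • x) y
      - Complex.I * w x (Complex.I • y) - w (Complex.I • x) (Complex.I • y)) ?_ ?_ ?_ ?_,
    fun x y => rfl⟩
  · intro x x' y; simp only [smul_add, hadd]; push_cast; ring
  · intro c x y
    rw [hI, hc c x]
    simp only [hadd, hsmul]
    push_cast
    conv_rhs => rw [← Complex.re_add_im c]
    simp only [smul_eq_mul]
    linear_combination (c.im * (w (Complex.I • x) y + w x (Complex.I • y)) : ℂ) * Complex.I_mul_I
  · intro x y y'; simp only [smul_add, hadd']; push_cast; ring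
  · intro c x y
    rw [hI, hc c y]
    simp only [hadd', hsmul']
    push_cast
    conv_rhs => rw [← Complex.re_add_im c]
    simp only [smul_eq_mul]
    linear_combination (c.im * (w (Complex.I • x) y + w x (Complex.I • y)) : ℂ) * Complex.I_mul_I

/-- Boundedness makes an additive map on `ℝ` linear: real homogeneity of a continuous biadditive
form needs no separate assumption. -/
lemma real_linear_of_bound (f : ℝ → ℝ) (hadd : ∀ s t, f (s + t) = f s + f t) (K : ℝ)
    (hK : ∀ t, |f t| ≤ K * |t|) (t : ℝ) : f t = t * f 1 := by
  let g : ℝ →+ ℝ := AddMonoidHom.mk' f hadd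
  have hg : Continuous g := AddMonoidHomClass.continuous_of_bound g K hK
  simpa [g] using map_real_smul g hg t 1

/-! ### Continuous cocycles on `B₂(H)` -/

/-- Every continuous complex-bilinear cocycle on `B₂(H)` is of the form `tr (d [x, y])`. For a
basis vector `o`, the operator `d` is read off from `⟪v, d u⟫ = Ω(|u⟩⟨o|, |o⟩⟨v|)`. -/
lemma exists_form_eq (Ω : HS e →ₗ[ℂ] HS e →ₗ[ℂ] ℂ) (hskew : ∀ x y, Ω x y = - Ω y x)
    (hcoc : ∀ x y z, Ω (x * y - y * x) z + Ω (y * z - z * y) x + Ω (z * x - x * z) y = 0)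
    (C : ℝ) (hC : ∀ x y, ‖Ω x y‖ ≤ C * ‖toLp e x‖ * ‖toLp e y‖) :
    ∃ d : H →L[ℂ] H, Ω = form e d := by
  rcases isEmpty_or_nonempty J with hJ | ⟨⟨k⟩⟩
  · refine ⟨0, ?_⟩
    have h0 : ∀ x : HS e, x = 0 := fun x => eq_zero_of_norm_toLp (by simp [norm_toLp])
    ext x y
    rw [h0 x]; simp
  have ho : ‖e k‖ = 1 := e.orthonormal.1 k
  let B : H →L⋆[ℂ] H →L[ℂ] ℂ := LinearMap.mkContinuous₂
    (LinearMap.mk₂'ₛₗ (starRingEnd ℂ) (RingHom.id ℂ)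
      (fun v u => Ω (r e u (e k)) (r e (e k) v))
      (fun v v' u => by simp [r_add_right])
      (fun c v u => by simp [r_smul_right])
      (fun v u u' => by simp [r_add_left])
      (fun c v u => by simp [r_smul_left])) C
    (fun v u => (hC _ _).trans_eq (by rw [norm_toLp_r, norm_toLp_r', mul_right_comm]))
  let d : H →L[ℂ] H := ContinuousLinearMap.adjoint (continuousLinearMapOfBilin B)
  have hd : ∀ u v, ⟪v, d u⟫ = Ω (r e u (e k)) (r e (e k) v) := by
    intro u v
    rw [ContinuousLinearMap.adjoint_inner_right, continuousLinearMapOfBilin_apply]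
    rfl
  have hd0 : ⟪e k, d (e k)⟫ = 0 := by
    rw [hd]
    have := hskew (r e (e k) (e k)) (r e (e k) (e k))
    linear_combination (1 / 2) * this
  refine ⟨d, sub_eq_zero.1 (eq_zero_of_r₂ (Ω - form e d) (C + 2 * ‖d‖) ?_ ?_)⟩
  · intro x y
    rw [LinearMap.sub_apply, LinearMap.sub_apply]
    refine (norm_sub_le _ _).trans ?_
    linarith [hC x y, norm_form_le d x y]
  · refine cocycle_r_eq_zero (Ω - form e d) ?_ ?_ (e k) ho ?_
    · intro x y
      simp only [LinearMap.sub_apply]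
      linear_combination hskew x y - form_skew d x y
    · intro x y z
      have h1 := hcoc x y z
      have h2 := form_cocycle d x y z
      simp only [LinearMap.sub_apply]
      linear_combination h1 - h2
    · intro u v
      simp only [LinearMap.sub_apply, form_apply, lmul_r, trForm_r, coe_r, rankOne_apply,
        inner_smul_right, hd0, ← hd]
      rw [inner_self_eq_norm_sq_to_K, ho]
      simp

/-- A form on `B₂(H)` that is complex-bilinear and satisfies the cocycle identity on `u₂(H)`
satisfies it everywhere. -/
lemma cocycle_of_skew (Ω : HS e →ₗ[ℂ] HS e →ₗ[ℂ] ℂ)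
    (h : ∀ x y z : HS e, star x = -x → star y = -y → star z = -z →
      Ω (x * y - y * x) z + Ω (y * z - z * y) x + Ω (z * x - x * z) y = 0) (x y z : HS e) :
    Ω (x * y - y * x) z + Ω (y * z - z * y) x + Ω (z * x - x * z) y = 0 := by
  have h1 : ∀ x y z : HS e, star x = -x → star y = -y →
      Ω (x * y - y * x) z + Ω (y * z - z * y) x + Ω (z * x - x * z) y = 0 := by
    intro x y z hx hy
    obtain ⟨a, b, ha, hb, rfl⟩ := exists_skew_add z
    have e1 := h x y a hx hy ha
    have e2 := h x y b hx hy hb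
    simp only [mul_add, add_mul, smul_mul_assoc, mul_smul_comm, map_add, map_sub, map_smul,
      LinearMap.add_apply, LinearMap.sub_apply, LinearMap.smul_apply, smul_eq_mul] at e1 e2 ⊢
    linear_combination e1 + Complex.I * e2
  have h2 : ∀ x y z : HS e, star x = -x →
      Ω (x * y - y * x) z + Ω (y * z - z * y) x + Ω (z * x - x * z) y = 0 := by
    intro x y z hx
    obtain ⟨a, b, ha, hb, rfl⟩ := exists_skew_add y
    have e1 := h1 x a z hx ha
    have e2 := h1 x b z hx hb
    simp only [mul_add, add_mul, smul_mul_assoc, mul_smul_comm, map_add, map_sub, map_smul,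
      LinearMap.add_apply, LinearMap.sub_apply, LinearMap.smul_apply, smul_eq_mul] at e1 e2 ⊢
    linear_combination e1 + Complex.I * e2
  obtain ⟨a, b, ha, hb, rfl⟩ := exists_skew_add x
  have e1 := h2 a y z ha
  have e2 := h2 b y z hb
  simp only [mul_add, add_mul, smul_mul_assoc, mul_smul_comm, map_add, map_sub, map_smul,
    LinearMap.add_apply, LinearMap.sub_apply, LinearMap.smul_apply, smul_eq_mul] at e1 e2 ⊢
  linear_combination e1 + Complex.I * e2

/-- If `Re tr (c [x, y])` vanishes on `u₂(H)`, the skew-adjoint operator `c` commutes with `u₂(H)`,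
because `tr ([c, x] y) = -‖[c, x]‖₂²` for `y = [c, x]`. It then commutes with all rank-one
operators and is a scalar. -/
lemma eq_smul_one_of_form_eq_zero (c : H →L[ℂ] H) (hc : star c = -c)
    (h : ∀ x y : HS e, star x = -x → star y = -y → (form e c x y).re = 0) :
    ∃ μ : ℝ, c = ((μ : ℂ) * Complex.I) • (1 : H →L[ℂ] H) := by
  rcases isEmpty_or_nonempty J with hJ | ⟨⟨k⟩⟩
  · refine ⟨0, ContinuousLinearMap.ext_on (s := Set.range e)
      (Submodule.dense_iff_topologicalClosure_eq_top.2 e.dense_span) ?_⟩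
    rintro _ ⟨j, rfl⟩
    exact hJ.elim j
  have hcomm : ∀ x : HS e, star x = -x → lmul e c x - rmul e c x = 0 := by
    intro x hx
    have hz : star (lmul e c x - rmul e c x) = -(lmul e c x - rmul e c x) := by
      have h1 : ∀ y : HS e, rmul e (-c) (-y) = rmul e c y :=
        fun y => Subtype.ext (neg_mul_neg y.1 c)
      have h2 : ∀ y : HS e, lmul e (-c) (-y) = lmul e c y :=
        fun y => Subtype.ext (neg_mul_neg c y.1)
      rw [star_sub, star_lmul, star_rmul, hc, hx, h1, h2, neg_sub]
    have h1 := h x _ hx hz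
    rw [form_eq_commutator, trForm_apply, hz, map_neg, inner_neg_left,
      inner_self_eq_norm_sq_to_K] at h1
    refine eq_zero_of_norm_toLp ?_
    rw [← sq_eq_zero_iff]
    have h2 := neg_eq_zero.1 h1
    exact_mod_cast h2
  have hcomm' : ∀ x : HS e, lmul e c x - rmul e c x = 0 := by
    intro x
    obtain ⟨a, b, ha, hb, rfl⟩ := exists_skew_add x
    have h1 := hcomm a ha
    have h2 := hcomm b hb
    rw [map_add, map_add, map_smul, map_smul, add_sub_add_comm, ← smul_sub, h1, h2,
      smul_zero, add_zero]
  have ho : ⟪e k, e k⟫ = 1 := by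
    rw [inner_self_eq_norm_sq_to_K, e.orthonormal.1 k]; simp
  have hscal : c = ⟪e k, c (e k)⟫ • (1 : H →L[ℂ] H) := by
    ext u
    have h1 := congrArg (fun z : HS e => z.1 (e k)) (sub_eq_zero.1 (hcomm' (r e u (e k))))
    simp only [coe_lmul, coe_rmul, coe_r, mul_apply_eq_comp, rankOne_apply, ho,
      one_smul] at h1
    exact h1
  refine ⟨(⟪e k, c (e k)⟫).im, ?_⟩
  have him : (⟪e k, c (e k)⟫).re = 0 := by
    have h1 : (starRingEnd ℂ) ⟪e k, c (e k)⟫ = - ⟪e k, c (e k)⟫ := by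
      rw [inner_conj_symm, ← ContinuousLinearMap.adjoint_inner_right,
        ← ContinuousLinearMap.star_eq_adjoint, hc]
      simp
    have h2 := congrArg Complex.re h1
    rw [Complex.conj_re, Complex.neg_re] at h2
    linarith
  have : ((⟪e k, c (e k)⟫).im : ℂ) * Complex.I = ⟪e k, c (e k)⟫ := by
    conv_rhs => rw [← Complex.re_add_im ⟪e k, c (e k)⟫, him]
    simp
  rw [this]
  exact hscal

/-! ### Continuous real cocycles on `u₂(H)` -/

lemma mem_of_skewHS {x : H →L[ℂ] H} (hx : skewHS e x) : x ∈ HS e := hx.2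

lemma skewHS_coe {x : HS e} (hx : star x = -x) : skewHS e x.1 :=
  ⟨congrArg Subtype.val hx, x.2⟩

lemma star_eq_of_skewHS {x : H →L[ℂ] H} (hx : skewHS e x) :
    star (⟨x, mem_of_skewHS hx⟩ : HS e) = -⟨x, mem_of_skewHS hx⟩ := Subtype.ext hx.1

variable (e) in
/-- The skew-adjoint part of a Hilbert–Schmidt operator. -/
noncomputable def sk (x : HS e) : HS e := (1 / 2 : ℂ) • (x - star x)

lemma star_sk (x : HS e) : star (sk e x) = - sk e x := by
  simp [sk, ← smul_neg]

lemma sk_of_skew {x : HS e} (hx : star x = -x) : sk e x = x := by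
  rw [sk, hx]; module

lemma sk_I_smul {x : HS e} (hx : star x = -x) : sk e (Complex.I • x) = 0 := by
  rw [sk, star_smul, hx, RCLike.star_def, Complex.conj_I]; module

lemma sk_add (x y : HS e) : sk e (x + y) = sk e x + sk e y := by
  rw [sk, sk, sk, star_add]; module

lemma sk_smul (t : ℝ) (x : HS e) : sk e ((t : ℂ) • x) = (t : ℂ) • sk e x := by
  rw [sk, sk, star_smul, RCLike.star_def, Complex.conj_ofReal]; module

lemma norm_sk_le (x : HS e) : ‖toLp e (sk e x)‖ ≤ ‖toLp e x‖ := by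
  rw [sk, map_smul, map_sub, norm_smul]
  have h := norm_sub_le (toLp e x) (toLp e (star x))
  rw [norm_toLp_star] at h
  norm_num
  linarith

set_option maxHeartbeats 2000000 in
/-- Every continuous real cocycle on `u₂(H)` is `Re tr (d [x, y])` for some `d ∈ u(H)`. The
cocycle is precomposed with the projection `sk` onto `u₂(H)` and then complexified in both variables.
-/
lemma exists_form_of_real (ω : HS e → HS e → ℝ)
    (hadd : ∀ x x' y, star x = -x → star x' = -x' → star y = -y → ω (x + x') y = ω x y + ω x' y)
    (hskew : ∀ x y, star x = -x → star y = -y → ω x y = - ω y x)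
    (hcoc : ∀ x y z, star x = -x → star y = -y → star z = -z →
      ω (x * y - y * x) z + ω (y * z - z * y) x + ω (z * x - x * z) y = 0)
    (C : ℝ) (hC : ∀ x y, star x = -x → star y = -y → |ω x y| ≤ C * ‖toLp e x‖ * ‖toLp e y‖) :
    ∃ d : H →L[ℂ] H, star d = -d ∧
      ∀ x y : HS e, star x = -x → star y = -y → ω x y = (form e d x y).re := by
  have hst : ∀ (t : ℝ) (x : HS e), star x = -x → star ((t : ℂ) • x) = -((t : ℂ) • x) := by
    intro t x hx
    rw [star_smul, hx, RCLike.star_def, Complex.conj_ofReal, smul_neg]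
  have hsmul : ∀ (t : ℝ) x y, star x = -x → star y = -y → ω ((t : ℂ) • x) y = t * ω x y := by
    intro t x y hx hy
    have := real_linear_of_bound (fun t : ℝ => ω ((t : ℂ) • x) y) (fun s t => by
      rw [← hadd _ _ _ (hst s x hx) (hst t x hx) hy, ← add_smul, ← Complex.ofReal_add])
      (C * ‖toLp e x‖ * ‖toLp e y‖) (fun t => by
        refine (hC _ _ (hst t x hx) hy).trans_eq ?_
        rw [map_smul, norm_smul, Complex.norm_real, Real.norm_eq_abs]; ring) t
    simpa using this
  have hadd' : ∀ x y y', star x = -x → star y = -y → star y' = -y' →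
      ω x (y + y') = ω x y + ω x y' := by
    intro x y y' hx hy hy'
    have hyy : star (y + y') = -(y + y') := by rw [star_add, hy, hy', neg_add]
    rw [hskew _ _ hx hyy, hadd _ _ _ hy hy' hx, hskew _ _ hy hx, hskew _ _ hy' hx]; ring
  have hsmul' : ∀ (t : ℝ) x y, star x = -x → star y = -y → ω x ((t : ℂ) • y) = t * ω x y := by
    intro t x y hx hy
    rw [hskew _ _ hx (hst t y hy), hsmul _ _ _ hy hx, hskew _ _ hy hx]; ring
  have w1 : ∀ x x' y : HS e, ω (sk e (x + x')) (sk e y)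
      = ω (sk e x) (sk e y) + ω (sk e x') (sk e y) := fun x x' y => by
    rw [sk_add]; exact hadd _ _ _ (star_sk _) (star_sk _) (star_sk _)
  have w2 : ∀ x y y' : HS e, ω (sk e x) (sk e (y + y'))
      = ω (sk e x) (sk e y) + ω (sk e x) (sk e y') := fun x y y' => by
    rw [sk_add]; exact hadd' _ _ _ (star_sk _) (star_sk _) (star_sk _)
  have w3 : ∀ (t : ℝ) (x y : HS e), ω (sk e ((t : ℂ) • x)) (sk e y)
      = t * ω (sk e x) (sk e y) := fun t x y => by
    rw [sk_smul]; exact hsmul _ _ _ (star_sk _) (star_sk _)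
  have w4 : ∀ (t : ℝ) (x y : HS e), ω (sk e x) (sk e ((t : ℂ) • y))
      = t * ω (sk e x) (sk e y) := fun t x y => by
    rw [sk_smul]; exact hsmul' _ _ _ (star_sk _) (star_sk _)
  obtain ⟨Ω, hΩ⟩ := exists_complexify (fun x y : HS e => ω (sk e x) (sk e y)) w1 w2 w3 w4
  have h0 : ∀ x, star x = -x → ω 0 x = 0 := fun x hx => by
    have := hsmul 0 x x hx hx
    simpa using this
  have h0' : ∀ x, star x = -x → ω x 0 = 0 := fun x hx => by
    have := hsmul' 0 x x hx hx
    simpa using this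
  have hΩr : ∀ x y, star x = -x → star y = -y → Ω x y = ω x y := by
    intro x y hx hy
    rw [hΩ, sk_I_smul hx, sk_I_smul hy, sk_of_skew hx, sk_of_skew hy, h0 _ hy, h0' _ hx,
      h0 _ (by simp)]
    simp
  have hΩskew : ∀ x y, Ω x y = - Ω y x := by
    intro x y
    have hs : ∀ x y, ω (sk e x) (sk e y) = - ω (sk e y) (sk e x) :=
      fun x y => hskew _ _ (star_sk x) (star_sk y)
    rw [hΩ, hΩ, hs y x, hs (Complex.I • y) x, hs y (Complex.I • x),
      hs (Complex.I • y) (Complex.I • x)]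
    push_cast
    ring
  have hbr : ∀ x y : HS e, star x = -x → star y = -y →
      star (x * y - y * x) = -(x * y - y * x) := by
    intro x y hx hy
    have hn : ∀ x y : HS e, -x * -y = x * y := fun x y => Subtype.ext (neg_mul_neg x.1 y.1)
    rw [star_sub, star_mul, star_mul, hx, hy, hn, hn, neg_sub]
  have hΩcoc := cocycle_of_skew Ω (fun x y z hx hy hz => by
    rw [hΩr _ _ (hbr x y hx hy) hz, hΩr _ _ (hbr y z hy hz) hx, hΩr _ _ (hbr z x hz hx) hy]
    exact_mod_cast hcoc x y z hx hy hz)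
  have hΩC : ∀ x y, ‖Ω x y‖ ≤ (4 * |C|) * ‖toLp e x‖ * ‖toLp e y‖ := by
    intro x y
    have hb : ∀ x y, |ω (sk e x) (sk e y)| ≤ |C| * ‖toLp e x‖ * ‖toLp e y‖ := by
      intro x y
      refine (hC _ _ (star_sk x) (star_sk y)).trans ?_
      gcongr
      · exact le_abs_self C
      · exact norm_sk_le x
      · exact norm_sk_le y
    have hI : ∀ x : HS e, ‖toLp e (Complex.I • x)‖ = ‖toLp e x‖ := fun x => by
      rw [map_smul, norm_smul, Complex.norm_I, one_mul]
    have b1 := hb x y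
    have b2 := hb (Complex.I • x) y
    have b3 := hb x (Complex.I • y)
    have b4 := hb (Complex.I • x) (Complex.I • y)
    rw [hI] at b2 b4
    rw [hI] at b3 b4
    rw [hΩ]
    refine (norm_sub_le _ _).trans ((add_le_add_left ((norm_sub_le _ _).trans
      (add_le_add_left (norm_sub_le _ _) _)) _).trans ?_)
    simp only [norm_mul, Complex.norm_I, one_mul, Complex.norm_real, Real.norm_eq_abs]
    linarith
  obtain ⟨d, hd⟩ := exists_form_eq Ω hΩskew hΩcoc _ hΩC
  -- the values of `form e d` on `u₂(H)` are real, so `d` and its skew-adjoint part agree there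
  refine ⟨(1 / 2 : ℂ) • (d - star d), ?_, ?_⟩
  · simp [← smul_neg]
  · intro x y hx hy
    have h1 : form e d x y = ω x y := by rw [← hd, hΩr x y hx hy]
    rw [form_smul, form_sub, form_star d hx hy, h1, Complex.conj_ofReal, sub_neg_eq_add,
      ← Complex.ofReal_add]
    simp
    ring

end Basic

end HilbertSchmidt

open HilbertSchmidt

/-- For `d ∈ u(H)`, `ω_d(x,y) = tr(d[x,y])` is a continuous Lie algebra `2`-cocycle on
`u₂(H)`; it is a coboundary if and only if `d ∈ ℝ i 1 + u₂(H)`; and every continuous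
`2`-cocycle on `u₂(H)` is of the form `ω_{d'}` for some `d' ∈ u(H)`. Consequently
`H²(u₂(H), ℝ) ≅ u(H) / (ℝ i 1 + u₂(H))`. -/
theorem stmt_13 {H : Type} [NormedAddCommGroup H] [InnerProductSpace ℂ H] [CompleteSpace H]
    {J : Type} (e : HilbertBasis J ℂ H)
    (d : H →L[ℂ] H) (hd : star d = -d) :
    -- antisymmetry and the cocycle identity
    (∀ x y : H →L[ℂ] H, skewHS e x → skewHS e y → omegaD e d x y = - omegaD e d y x)
    ∧ (∀ x y z : H →L[ℂ] H, skewHS e x → skewHS e y → skewHS e z →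
        omegaD e d ⁅x, y⁆ z + omegaD e d ⁅y, z⁆ x + omegaD e d ⁅z, x⁆ y = 0)
    -- continuity with respect to the Hilbert–Schmidt norm
    ∧ (∃ C : ℝ, ∀ x y : H →L[ℂ] H, skewHS e x → skewHS e y →
        |omegaD e d x y| ≤ C * Real.sqrt (∑' j, ‖x (e j)‖ ^ 2)
          * Real.sqrt (∑' j, ‖y (e j)‖ ^ 2))
    -- `ω_d` is a coboundary iff `d ∈ ℝ i 1 + u₂(H)`
    ∧ ((∃ b : H →L[ℂ] H, skewHS e b ∧
          ∀ x y : H →L[ℂ] H, skewHS e x → skewHS e y → omegaD e d x y = omegaD e b x y)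
        ↔ (∃ (μ : ℝ) (b : H →L[ℂ] H), skewHS e b ∧
            d = ((μ : ℂ) * Complex.I) • (1 : H →L[ℂ] H) + b))
    -- every continuous 2-cocycle on `u₂(H)` is of the form `ω_{d'}` for some `d' ∈ u(H)`
    ∧ (∀ ω : (H →L[ℂ] H) → (H →L[ℂ] H) → ℝ,
        (∀ x x' y, skewHS e x → skewHS e x' → skewHS e y →
          ω (x + x') y = ω x y + ω x' y) →
        (∀ x y, skewHS e x → skewHS e y → ω x y = - ω y x) →
        (∀ x y z, skewHS e x → skewHS e y → skewHS e z →
          ω ⁅x, y⁆ z + ω ⁅y, z⁆ x + ω ⁅z, x⁆ y = 0) →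
        (∃ C : ℝ, ∀ x y, skewHS e x → skewHS e y →
          |ω x y| ≤ C * Real.sqrt (∑' j, ‖x (e j)‖ ^ 2) * Real.sqrt (∑' j, ‖y (e j)‖ ^ 2)) →
        ∃ d' : H →L[ℂ] H, star d' = -d' ∧
          ∀ x y, skewHS e x → skewHS e y → ω x y = omegaD e d' x y) := by
  have hlie : ∀ x y : HS e, ⁅x.1, y.1⁆ = (x * y - y * x).1 := fun x y => Ring.lie_def x.1 y.1
  have hre : ∀ (d : H →L[ℂ] H) {x y : H →L[ℂ] H} (hx : skewHS e x) (hy : skewHS e y),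
      omegaD e d x y = (form e d ⟨x, mem_of_skewHS hx⟩ ⟨y, mem_of_skewHS hy⟩).re :=
    fun d x y hx hy => omegaD_eq d ⟨x, mem_of_skewHS hx⟩ ⟨y, mem_of_skewHS hy⟩
  refine ⟨?_, ?_, ⟨2 * ‖d‖, ?_⟩, ⟨?_, ?_⟩, ?_⟩
  · intro x y hx hy
    rw [hre d hx hy, hre d hy hx, form_skew, Complex.neg_re]
  · intro x y z hx hy hz
    have h := form_cocycle d (⟨x, mem_of_skewHS hx⟩ : HS e) ⟨y, mem_of_skewHS hy⟩ ⟨z, mem_of_skewHS hz⟩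
    have h' := congrArg Complex.re h
    rw [Complex.add_re, Complex.add_re, ← omegaD_eq, ← omegaD_eq, ← omegaD_eq, ← hlie, ← hlie,
      ← hlie] at h'
    exact h'
  · intro x y hx hy
    rw [hre d hx hy]
    refine (Complex.abs_re_le_norm _).trans ((norm_form_le d _ _).trans_eq ?_)
    rw [norm_toLp, norm_toLp]
  · rintro ⟨b, hb, h⟩
    obtain ⟨μ, hμ⟩ := eq_smul_one_of_form_eq_zero (e := e) (d - b)
      (by rw [star_sub, hd, hb.1]; abel)
      (fun x y hx hy => by
        rw [form_sub, Complex.sub_re, ← omegaD_eq, ← omegaD_eq,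
          h x.1 y.1 (skewHS_coe hx) (skewHS_coe hy), sub_self])
    exact ⟨μ, b, hb, by rw [← hμ, sub_add_cancel]⟩
  · rintro ⟨μ, b, hb, rfl⟩
    refine ⟨b, hb, fun x y hx hy => ?_⟩
    have h := form_sub (e := e) (((μ : ℂ) * Complex.I) • (1 : H →L[ℂ] H) + b) b
      ⟨x, mem_of_skewHS hx⟩ ⟨y, mem_of_skewHS hy⟩
    rw [add_sub_cancel_right, form_smul, form_one, mul_zero] at h
    rw [hre _ hx hy, hre _ hx hy, ← sub_eq_zero, ← Complex.sub_re, ← h, Complex.zero_re]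
  · rintro ω hadd hskew hcoc ⟨C, hC⟩
    obtain ⟨d', hd', h⟩ := exists_form_of_real (e := e) (fun x y => ω x.1 y.1)
      (fun x x' y hx hx' hy => hadd _ _ _ (skewHS_coe hx) (skewHS_coe hx') (skewHS_coe hy))
      (fun x y hx hy => hskew _ _ (skewHS_coe hx) (skewHS_coe hy))
      (fun x y z hx hy hz => by
        have := hcoc _ _ _ (skewHS_coe hx) (skewHS_coe hy) (skewHS_coe hz)
        rw [hlie, hlie, hlie] at this
        exact this)
      C (fun x y hx hy => by
        rw [norm_toLp, norm_toLp]
        exact hC _ _ (skewHS_coe hx) (skewHS_coe hy))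
    refine ⟨d', hd', fun x y hx hy => ?_⟩
    rw [hre d' hx hy, ← h _ _ (star_eq_of_skewHS hx) (star_eq_of_skewHS hy)]
end
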